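/- With the Falk–Winther local bounded commuting projections I_h^g, I_h^{ND}, I_h^{BDM}, Q_h and the operators I_{h0}^{gc}, I_h^{gc}, I_{h0}^d, I_h^d defined from them, the following commutation relations hold: (i) I_{h0}^{gc}(∇v) = ∇(I_h^g v) for all v ∈ H₀¹(Ω); (ii) I_{h0}^d(curl v) = curl(I_{h0}^{gc} v) for all v ∈ H₀(grad curl, Ω); (iii) div(I_{h0}^d v) = Q_h(div v) for all v ∈ H₀¹(Ω;ℝ³); and the analogous identities for I_h^{gc}, I_h^d on H₀¹(Ω), H(grad curl,Ω)∩H₀(curl,Ω), and H¹(Ω;ℝ³)∩H₀(div,Ω). -/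

import Mathlib

open MeasureTheory
open scoped Classical

noncomputable section

/-! ### Basic vector calculus on ℝ³ -/

abbrev Vec : Type := Fin 3 → ℝ
abbrev Mat : Type := Fin 3 → Fin 3 → ℝ

/-- Euclidean dot product on ℝ³. -/
def dot3 (v w : Vec) : ℝ := ∑ i, v i * w i
/-- squared Euclidean norm. -/
def nsq3 (v : Vec) : ℝ := dot3 v v
/-- Euclidean norm. -/
def enorm3 (v : Vec) : ℝ := Real.sqrt (dot3 v v)
/-- normalization to a unit vector. -/
def normalize3 (v : Vec) : Vec := (enorm3 v)⁻¹ • v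
/-- cross product on ℝ³. -/
def cross3 (v w : Vec) : Vec :=
  ![v 1 * w 2 - v 2 * w 1, v 2 * w 0 - v 0 * w 2, v 0 * w 1 - v 1 * w 0]
/-- Frobenius inner product of 3×3 matrices. -/
def dotM (A B : Mat) : ℝ := ∑ i, ∑ j, A i j * B i j
/-- squared Frobenius norm. -/
def nsqM (A : Mat) : ℝ := dotM A A

/-- partial derivative ∂ᵢ of a scalar field. -/
def pd (i : Fin 3) (f : Vec → ℝ) (x : Vec) : ℝ := fderiv ℝ f x (Pi.single i 1)
/-- gradient of a scalar field. -/
def grad3 (f : Vec → ℝ) (x : Vec) : Vec := fun i => pd i f x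
/-- curl of a vector field. -/
def curl3 (v : Vec → Vec) (x : Vec) : Vec :=
  ![pd 1 (fun y => v y 2) x - pd 2 (fun y => v y 1) x,
    pd 2 (fun y => v y 0) x - pd 0 (fun y => v y 2) x,
    pd 0 (fun y => v y 1) x - pd 1 (fun y => v y 0) x]
/-- divergence of a vector field. -/
def div3 (v : Vec → Vec) (x : Vec) : ℝ := ∑ i, pd i (fun y => v y i) x
/-- Jacobian matrix of a vector field. -/
def jac3 (v : Vec → Vec) (x : Vec) : Mat := fun i j => pd j (fun y => v y i) x
/-- application of a matrix to a vector (e.g. normal derivative ∂ₙ). -/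
def japply (J : Mat) (n : Vec) : Vec := fun i => ∑ j, J i j * n j

/-- iterated partial derivatives along a list of directions. -/
def pdIter : List (Fin 3) → (Vec → ℝ) → Vec → ℝ
  | [], f => f
  | i :: l, f => pd i (pdIter l f)

/-- `f` is (the function of) a polynomial of total degree at most `k`. -/
def PolyDeg (k : ℕ) (f : Vec → ℝ) : Prop :=
  ∃ p : MvPolynomial (Fin 3) ℝ, p.totalDegree ≤ k ∧ ∀ x, f x = MvPolynomial.eval x p
/-- vector-valued polynomial of total degree at most `k`. -/
def VPolyDeg (k : ℕ) (v : Vec → Vec) : Prop := ∀ i, PolyDeg k fun x => v x i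

/-! ### Tetrahedra -/

/-- A (nondegenerate) tetrahedron in ℝ³, given by its four vertices. -/
structure Tetra where
  vtx : Fin 4 → Vec
  indep : AffineIndependent ℝ vtx

namespace Tetra

/-- the tetrahedron as a closed subset of ℝ³. -/
def K (T : Tetra) : Set Vec := convexHull ℝ (Set.range T.vtx)
/-- the edge joining vertices `i`, `j`. -/
def edge (T : Tetra) (i j : Fin 4) : Set Vec := segment ℝ (T.vtx i) (T.vtx j)
/-- a unit tangent vector of the edge joining vertices `i`, `j`. -/
def tangent (T : Tetra) (i j : Fin 4) : Vec := normalize3 (T.vtx j - T.vtx i)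
/-- the face opposite to vertex `i`. -/
def face (T : Tetra) (i : Fin 4) : Set Vec := convexHull ℝ (T.vtx '' {j | j ≠ i})
/-- unit outward normal of the face opposite to vertex `i`. -/
def outNormal (T : Tetra) (i : Fin 4) : Vec :=
  let a := T.vtx (i.succAbove 0)
  let u := cross3 (T.vtx (i.succAbove 1) - a) (T.vtx (i.succAbove 2) - a)
  (if 0 < dot3 u (T.vtx i - a) then (-1 : ℝ) else 1) • normalize3 u

/-- `lam` is the family of barycentric coordinates of `T`. -/
def IsBary (T : Tetra) (lam : Fin 4 → Vec → ℝ) : Prop :=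
  (∀ i, PolyDeg 1 (lam i)) ∧ ∀ i j, lam i (T.vtx j) = if i = j then (1 : ℝ) else 0
/-- `b` is the (quartic) bubble function of `T`. -/
def IsBubble (T : Tetra) (b : Vec → ℝ) : Prop :=
  ∃ lam, T.IsBary lam ∧ ∀ x, b x = ∏ i, lam i x

end Tetra

/-! ### Local shape function spaces -/

/-- the local space `W_k(K) = ∇P_{k+1}(K) ⊕ x × P₁(K;ℝ³) ⊕ b_K P₁(K;ℝ³)`. -/
def MemW (k : ℕ) (T : Tetra) (v : Vec → Vec) : Prop :=
  ∃ (q : Vec → ℝ) (p r : Vec → Vec) (b : Vec → ℝ), T.IsBubble b ∧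
    PolyDeg (k + 1) q ∧ VPolyDeg 1 p ∧ VPolyDeg 1 r ∧
    ∀ x, v x = grad3 q x + cross3 x (p x) + b x • r x

/-- the local Tai–Winther space `V^d(K) = P₁(K;ℝ³) ⊕ curl(b_K P₁(K;ℝ³))`. -/
def MemVd (T : Tetra) (v : Vec → Vec) : Prop :=
  ∃ (p r : Vec → Vec) (b : Vec → ℝ), T.IsBubble b ∧ VPolyDeg 1 p ∧ VPolyDeg 1 r ∧
    ∀ x, v x = p x + curl3 (fun y => b y • r y) x

/-- the local Nédélec space `V_k^{ND}(K) = ∇P_{k+1}(K) ⊕ x × P₁(K;ℝ³)`, `k = 1,2`. -/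
def MemND (k : ℕ) (v : Vec → Vec) : Prop :=
  ∃ (q : Vec → ℝ) (p : Vec → Vec), PolyDeg (k + 1) q ∧ VPolyDeg 1 p ∧
    ∀ x, v x = grad3 q x + cross3 x (p x)

/-- the face test space `RM_{k-2}(F) = P₀(F;ℝ²) ⊕ x^⊥ P_{k-2}(F)` on the face with
unit normal `n`; for `k = 1` this is just `P₀(F;ℝ²)`. -/
def MemRM (k : ℕ) (n : Vec) (q : Vec → Vec) : Prop :=
  ∃ (a : Vec) (c : ℝ), dot3 a n = 0 ∧ (k ≤ 1 → c = 0) ∧ ∀ x, q x = a + c • cross3 n x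

/-- the face test space `RT(F) = P₀(F;ℝ²) ⊕ x P₀(F)` on the face with unit normal `n`. -/
def MemRT (n : Vec) (q : Vec → Vec) : Prop :=
  ∃ (a : Vec) (c : ℝ), dot3 a n = 0 ∧ ∀ x, q x = a + c • (x - dot3 x n • n)

/-! ### Degrees of freedom -/

/-- edge moment `∫_e (v⋅t) q ds`. -/
def edgeMoment (T : Tetra) (a b : Fin 4) (v : Vec → Vec) (q : Vec → ℝ) : ℝ :=
  ∫ x in T.edge a b, dot3 (v x) (T.tangent a b) * q x ∂μH[1]
/-- tangential face moment `∫_F (v × n)⋅q dS`. -/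
def faceTanMoment (T : Tetra) (a : Fin 4) (v : Vec → Vec) (q : Vec → Vec) : ℝ :=
  ∫ x in T.face a, dot3 (cross3 (v x) (T.outNormal a)) (q x) ∂μH[2]
/-- normal face moment `∫_F (v⋅n) q dS`. -/
def faceNorMoment (T : Tetra) (a : Fin 4) (v : Vec → Vec) (q : Vec → ℝ) : ℝ :=
  ∫ x in T.face a, dot3 (v x) (T.outNormal a) * q x ∂μH[2]
/-- surface integral over a face. -/
def faceInt2 (T : Tetra) (a : Fin 4) (g : Vec → ℝ) : ℝ := ∫ x in T.face a, g x ∂μH[2]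
/-- diameter of a face. -/
def hF (T : Tetra) (a : Fin 4) : ℝ := Metric.diam (T.face a)

/-! ### Meshes -/

/-- A face-to-face tetrahedral mesh. -/
structure Mesh where
  n : ℕ
  npos : 0 < n
  el : Fin n → Tetra
  disj : ∀ i j, i ≠ j → interior (el i).K ∩ interior (el j).K = ∅
  conform : ∀ i j, i ≠ j → ∃ s e : Set (Fin 4),
    (el i).vtx '' s = (el j).vtx '' e ∧ (el i).K ∩ (el j).K = convexHull ℝ ((el i).vtx '' s)

namespace Mesh
/-- the open domain triangulated by the mesh. -/
def domain (M : Mesh) : Set Vec := interior (⋃ i, (M.el i).K)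
/-- the mesh triangulates the (connected, polyhedral) domain `Ω`. -/
def Covers (M : Mesh) (Ω : Set Vec) : Prop :=
  Ω = M.domain ∧ closure Ω = (⋃ i, (M.el i).K) ∧ IsConnected Ω
/-- the mesh size `h`. -/
def hsize (M : Mesh) : ℝ := ⨆ i, Metric.diam (M.el i).K
/-- shape regularity with constant `ρ`. -/
def ShapeReg (ρ : ℝ) (M : Mesh) : Prop :=
  ∀ i, ∃ x, Metric.ball x (ρ * Metric.diam (M.el i).K) ⊆ (M.el i).K
end Mesh

/-- A bounded polyhedral domain: a connected open set triangulated by some tetrahedral mesh. -/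
def PolyhedralDomain (Ω : Set Vec) : Prop := ∃ M : Mesh, M.Covers Ω

/-- piecewise vector fields on a mesh (one smooth representative per element). -/
abbrev DiscVF (M : Mesh) := Fin M.n → Vec → Vec
/-- piecewise scalar fields on a mesh. -/
abbrev DiscSF (M : Mesh) := Fin M.n → Vec → ℝ

/-- elementwise average (the `L²`-projection onto piecewise constants). -/
def avg (M : Mesh) (g : Vec → ℝ) (i : Fin M.n) : ℝ :=
  (∫ x in (M.el i).K, g x) / (volume (M.el i).K).toReal

/-! ### Global finite element spaces -/

/-- the `H(grad curl)`-nonconforming space `W_h`: piecewise `W_k(K)`, all DoFs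
single-valued, and the edge DoFs and `RM`-face DoFs vanishing on `∂Ω`. -/
def MemWh (k : ℕ) (M : Mesh) (Ω : Set Vec) (u : DiscVF M) : Prop :=
  (∀ i, MemW k (M.el i) (u i)) ∧
  (∀ i j a b c d, i ≠ j → (M.el i).edge a b = (M.el j).edge c d →
     ∀ q, PolyDeg k q → edgeMoment (M.el i) a b (u i) q = edgeMoment (M.el i) a b (u j) q) ∧
  (∀ i j a b, i ≠ j → (M.el i).face a = (M.el j).face b →
     ∀ q, MemRM k ((M.el i).outNormal a) q →
       faceTanMoment (M.el i) a (u i) q = faceTanMoment (M.el i) a (u j) q) ∧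
  (∀ i j a b, i ≠ j → (M.el i).face a = (M.el j).face b →
     ∀ q, MemRT ((M.el i).outNormal a) q →
       faceTanMoment (M.el i) a (curl3 (u i)) q = faceTanMoment (M.el i) a (curl3 (u j)) q) ∧
  (∀ i a b, (M.el i).edge a b ⊆ frontier Ω →
     ∀ q, PolyDeg k q → edgeMoment (M.el i) a b (u i) q = 0) ∧
  (∀ i a, (M.el i).face a ⊆ frontier Ω →
     ∀ q, MemRM k ((M.el i).outNormal a) q → faceTanMoment (M.el i) a (u i) q = 0)

/-- the space `W_{h0}`: all DoFs, including the curl-trace face DoFs, vanish on `∂Ω`. -/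
def MemWh0 (k : ℕ) (M : Mesh) (Ω : Set Vec) (u : DiscVF M) : Prop :=
  MemWh k M Ω u ∧
  ∀ i a, (M.el i).face a ⊆ frontier Ω →
    ∀ q, MemRT ((M.el i).outNormal a) q → faceTanMoment (M.el i) a (curl3 (u i)) q = 0

/-- the degree-`(k+1)` Lagrange space with zero boundary trace. -/
def MemVhg (k : ℕ) (M : Mesh) (Ω : Set Vec) (u : DiscSF M) : Prop :=
  (∀ i, PolyDeg (k + 1) (u i)) ∧
  (∀ i j, ∀ x ∈ (M.el i).K ∩ (M.el j).K, u i x = u j x) ∧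
  (∀ i, ∀ x ∈ (M.el i).K ∩ frontier Ω, u i x = 0)

/-- the Tai–Winther space `V_h^d`: normal components continuous, tangential `RT`-moments
single-valued, normal DoFs vanishing on `∂Ω`. -/
def MemVhd (M : Mesh) (Ω : Set Vec) (u : DiscVF M) : Prop :=
  (∀ i, MemVd (M.el i) (u i)) ∧
  (∀ i j a b, i ≠ j → (M.el i).face a = (M.el j).face b →
     (∀ q, PolyDeg 1 q → faceNorMoment (M.el i) a (u i) q = faceNorMoment (M.el i) a (u j) q) ∧
     (∀ q, MemRT ((M.el i).outNormal a) q →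
       faceTanMoment (M.el i) a (u i) q = faceTanMoment (M.el i) a (u j) q)) ∧
  (∀ i a, (M.el i).face a ⊆ frontier Ω →
     ∀ q, PolyDeg 1 q → faceNorMoment (M.el i) a (u i) q = 0)

/-- the Tai–Winther space `V_{h0}^d` with all DoFs vanishing on `∂Ω`. -/
def MemVh0d (M : Mesh) (Ω : Set Vec) (u : DiscVF M) : Prop :=
  MemVhd M Ω u ∧
  ∀ i a, (M.el i).face a ⊆ frontier Ω →
    ∀ q, MemRT ((M.el i).outNormal a) q → faceTanMoment (M.el i) a (u i) q = 0

/-- the piecewise-constant space `𝒬_h` with zero mean. -/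
def MemQh (M : Mesh) (q : Fin M.n → ℝ) : Prop :=
  ∑ i, q i * (volume (M.el i).K).toReal = 0

/-- the Nédélec space with vanishing tangential boundary DoFs. -/
def MemVND (k : ℕ) (M : Mesh) (Ω : Set Vec) (u : DiscVF M) : Prop :=
  (∀ i, MemND k (u i)) ∧
  (∀ i j a b c d, i ≠ j → (M.el i).edge a b = (M.el j).edge c d →
     ∀ q, PolyDeg k q → edgeMoment (M.el i) a b (u i) q = edgeMoment (M.el i) a b (u j) q) ∧
  (∀ i j a b, i ≠ j → (M.el i).face a = (M.el j).face b →
     ∀ q, MemRM k ((M.el i).outNormal a) q →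
       faceTanMoment (M.el i) a (u i) q = faceTanMoment (M.el i) a (u j) q) ∧
  (∀ i a b, (M.el i).edge a b ⊆ frontier Ω →
     ∀ q, PolyDeg k q → edgeMoment (M.el i) a b (u i) q = 0) ∧
  (∀ i a, (M.el i).face a ⊆ frontier Ω →
     ∀ q, MemRM k ((M.el i).outNormal a) q → faceTanMoment (M.el i) a (u i) q = 0)

/-- the lowest-order BDM space with vanishing normal boundary trace. -/
def MemVBDM (M : Mesh) (Ω : Set Vec) (u : DiscVF M) : Prop :=
  (∀ i, VPolyDeg 1 (u i)) ∧
  (∀ i j a b, i ≠ j → (M.el i).face a = (M.el j).face b →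
     ∀ x ∈ (M.el i).face a, dot3 (u i x) ((M.el i).outNormal a) = dot3 (u j x) ((M.el i).outNormal a)) ∧
  (∀ i a, (M.el i).face a ⊆ frontier Ω →
     ∀ x ∈ (M.el i).face a, dot3 (u i x) ((M.el i).outNormal a) = 0)

/-! ### Discrete norms and bilinear forms -/

/-- broken `L²` norm of a piecewise vector field. -/
def L2d (M : Mesh) (w : DiscVF M) : ℝ :=
  Real.sqrt (∑ i, ∫ x in (M.el i).K, nsq3 (w i x))
/-- `L²` norm of the (elementwise) curl. -/
def L2curl (M : Mesh) (w : DiscVF M) : ℝ :=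
  Real.sqrt (∑ i, ∫ x in (M.el i).K, nsq3 (curl3 (w i) x))
/-- broken `H¹` seminorm of the curl, `|curl v|_{1,h}`. -/
def semiCurl (M : Mesh) (w : DiscVF M) : ℝ :=
  Real.sqrt (∑ i, ∫ x in (M.el i).K, nsqM (jac3 (curl3 (w i)) x))
/-- the norm `‖v‖_{ε,h}`. -/
def epsNorm (ε : ℝ) (M : Mesh) (w : DiscVF M) : ℝ :=
  Real.sqrt ((L2d M w) ^ 2 + (L2curl M w) ^ 2 + ε ^ 2 * (semiCurl M w) ^ 2)
/-- broken `H¹` seminorm of a piecewise scalar field. -/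
def semiGrad (M : Mesh) (μ : DiscSF M) : ℝ :=
  Real.sqrt (∑ i, ∫ x in (M.el i).K, nsq3 (grad3 (μ i) x))

/-- `a_h(w,v) = Σ_K (∇curl w, ∇curl v)_K`. -/
def ah (M : Mesh) (w v : DiscVF M) : ℝ :=
  ∑ i, ∫ x in (M.el i).K, dotM (jac3 (curl3 (w i)) x) (jac3 (curl3 (v i)) x)
/-- `b(w,v) = (curl w, curl v)`. -/
def bh (M : Mesh) (w v : DiscVF M) : ℝ :=
  ∑ i, ∫ x in (M.el i).K, dot3 (curl3 (w i) x) (curl3 (v i) x)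
/-- `c(v,μ) = (v, ∇μ)`. -/
def ch (M : Mesh) (v : DiscVF M) (μ : DiscSF M) : ℝ :=
  ∑ i, ∫ x in (M.el i).K, dot3 (v i x) (grad3 (μ i) x)
/-- load functional `(f, v)`. -/
def fpair (M : Mesh) (f : Vec → Vec) (v : DiscVF M) : ℝ :=
  ∑ i, ∫ x in (M.el i).K, dot3 (f x) (v i x)

/-- `a_h(u, v_h)` with a continuous first argument, given by `J = ∇curl u`. -/
def ahC (M : Mesh) (J : Vec → Mat) (v : DiscVF M) : ℝ :=
  ∑ i, ∫ x in (M.el i).K, dotM (J x) (jac3 (curl3 (v i)) x)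
/-- `b(u, v_h)` with a continuous first argument, given by `cu = curl u`. -/
def bhC (M : Mesh) (cu : Vec → Vec) (v : DiscVF M) : ℝ :=
  ∑ i, ∫ x in (M.el i).K, dot3 (cu x) (curl3 (v i) x)

/-- broken `L²` distance between a function and a piecewise field. -/
def errL2 (M : Mesh) (v : Vec → Vec) (w : DiscVF M) : ℝ :=
  Real.sqrt (∑ i, ∫ x in (M.el i).K, nsq3 (v x - w i x))
/-- broken `L²` distance of curls, the first argument given by `cu = curl u`. -/
def errCurl (M : Mesh) (cu : Vec → Vec) (w : DiscVF M) : ℝ :=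
  Real.sqrt (∑ i, ∫ x in (M.el i).K, nsq3 (cu x - curl3 (w i) x))
/-- broken `H¹` distance of curls, the first argument given by `J = ∇curl u`. -/
def errSemi (M : Mesh) (J : Vec → Mat) (w : DiscVF M) : ℝ :=
  Real.sqrt (∑ i, ∫ x in (M.el i).K, nsqM (J x - jac3 (curl3 (w i)) x))
/-- error in the `‖·‖_{ε,h}` norm between `u` (with `curl u = cu`, `∇curl u = J`)
and a piecewise field `w`. -/
def errNorm (ε : ℝ) (M : Mesh) (u cu : Vec → Vec) (J : Vec → Mat) (w : DiscVF M) : ℝ :=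
  Real.sqrt ((errL2 M u w) ^ 2 + (errCurl M cu w) ^ 2 + ε ^ 2 * (errSemi M J w) ^ 2)
/-- broken `H¹` distance between a function with Jacobian `J` and a piecewise field. -/
def errJac (M : Mesh) (J : Vec → Mat) (w : DiscVF M) : ℝ :=
  Real.sqrt (∑ i, ∫ x in (M.el i).K, nsqM (J x - jac3 (w i) x))

/-- sum of a quantity over the boundary faces of the mesh. -/
def bdrySum (M : Mesh) (Ω : Set Vec) (g : Fin M.n → Fin 4 → ℝ) : ℝ :=
  ∑ i, ∑ a, if (M.el i).face a ⊆ frontier Ω then g i a else 0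

/-- the boundary part `ε² Σ_{F⊆∂Ω} h_F⁻¹ ‖curl v‖²_F` of the Nitsche norm. -/
def tripExtra (ε : ℝ) (M : Mesh) (Ω : Set Vec) (v : DiscVF M) : ℝ :=
  ε ^ 2 * bdrySum M Ω fun i a =>
    (hF (M.el i) a)⁻¹ * faceInt2 (M.el i) a fun x => nsq3 (curl3 (v i) x)
/-- the Nitsche norm `|||v|||_{ε,h}`. -/
def tripNorm (ε : ℝ) (M : Mesh) (Ω : Set Vec) (v : DiscVF M) : ℝ :=
  Real.sqrt ((epsNorm ε M v) ^ 2 + tripExtra ε M Ω v)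
/-- error in the Nitsche norm `|||·|||_{ε,h}`. -/
def errTrip (ε : ℝ) (M : Mesh) (Ω : Set Vec) (u cu : Vec → Vec) (J : Vec → Mat)
    (w : DiscVF M) : ℝ :=
  Real.sqrt ((errNorm ε M u cu J w) ^ 2 + ε ^ 2 * bdrySum M Ω fun i a =>
    (hF (M.el i) a)⁻¹ * faceInt2 (M.el i) a fun x => nsq3 (cu x - curl3 (w i) x))

/-- the Nitsche bilinear form `ã_h` on discrete functions. -/
def atildeD (σ : ℝ) (M : Mesh) (Ω : Set Vec) (w v : DiscVF M) : ℝ :=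
  ah M w v
  - bdrySum M Ω (fun i a => faceInt2 (M.el i) a fun x =>
      dot3 (japply (jac3 (curl3 (w i)) x) ((M.el i).outNormal a)) (curl3 (v i) x))
  - bdrySum M Ω (fun i a => faceInt2 (M.el i) a fun x =>
      dot3 (curl3 (w i) x) (japply (jac3 (curl3 (v i)) x) ((M.el i).outNormal a)))
  + bdrySum M Ω (fun i a => (σ / hF (M.el i) a) * faceInt2 (M.el i) a fun x =>
      dot3 (curl3 (w i) x) (curl3 (v i) x))

/-- the Nitsche form `ã_h(u, v_h)` with continuous first argument `u`
(`cu = curl u`, `J = ∇curl u`). -/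
def atildeC (σ : ℝ) (M : Mesh) (Ω : Set Vec) (cu : Vec → Vec) (J : Vec → Mat)
    (v : DiscVF M) : ℝ :=
  ahC M J v
  - bdrySum M Ω (fun i a => faceInt2 (M.el i) a fun x =>
      dot3 (japply (J x) ((M.el i).outNormal a)) (curl3 (v i) x))
  - bdrySum M Ω (fun i a => faceInt2 (M.el i) a fun x =>
      dot3 (cu x) (japply (jac3 (curl3 (v i)) x) ((M.el i).outNormal a)))
  + bdrySum M Ω (fun i a => (σ / hF (M.el i) a) * faceInt2 (M.el i) a fun x =>
      dot3 (cu x) (curl3 (v i) x))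
/-! ### Sobolev spaces via weak (distributional) derivatives -/

/-- smooth compactly supported scalar test functions on ℝ³. -/
def TestS (φ : Vec → ℝ) : Prop := ContDiff ℝ (⊤ : ℕ∞) φ ∧ HasCompactSupport φ
/-- smooth compactly supported vector test functions on ℝ³. -/
def TestV (φ : Vec → Vec) : Prop := ContDiff ℝ (⊤ : ℕ∞) φ ∧ HasCompactSupport φ

/-- extension by zero outside `Ω`. -/
def zextS (Ω : Set Vec) (f : Vec → ℝ) : Vec → ℝ := Ω.indicator f
/-- extension by zero outside `Ω` (vector-valued). -/
def zextV (Ω : Set Vec) (v : Vec → Vec) : Vec → Vec := Ω.indicator v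

/-- membership in `L²(Ω)`. -/
def MemL2S (Ω : Set Vec) (f : Vec → ℝ) : Prop := MemLp f 2 (volume.restrict Ω)
/-- membership in `L²(Ω;ℝ³)`. -/
def MemL2V (Ω : Set Vec) (v : Vec → Vec) : Prop := MemLp v 2 (volume.restrict Ω)

/-- `L²(Ω)` norm. -/
def L2SΩ (Ω : Set Vec) (f : Vec → ℝ) : ℝ := Real.sqrt (∫ x in Ω, (f x) ^ 2)
/-- `L²(Ω;ℝ³)` norm. -/
def L2VΩ (Ω : Set Vec) (v : Vec → Vec) : ℝ := Real.sqrt (∫ x in Ω, nsq3 (v x))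

/-- `g = ∂ᵢ f` in the sense of distributions on all of ℝ³. -/
def WkPD (i : Fin 3) (f g : Vec → ℝ) : Prop :=
  ∀ φ, TestS φ → ∫ x, g x * φ x = -∫ x, f x * pd i φ x
/-- `w = curl v` in the sense of distributions on all of ℝ³. -/
def WkCurlAll (v w : Vec → Vec) : Prop :=
  ∀ φ, TestV φ → ∫ x, dot3 (w x) (φ x) = ∫ x, dot3 (v x) (curl3 φ x)
/-- `d = div v` in the sense of distributions on all of ℝ³. -/
def WkDivAll (v : Vec → Vec) (d : Vec → ℝ) : Prop :=
  ∀ φ, TestS φ → ∫ x, d x * φ x = -∫ x, dot3 (v x) (grad3 φ x)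

/-- `g = ∂ᵢ f` in the sense of distributions on `Ω`. -/
def WkPDIn (Ω : Set Vec) (i : Fin 3) (f g : Vec → ℝ) : Prop :=
  ∀ φ, TestS φ → tsupport φ ⊆ Ω → ∫ x in Ω, g x * φ x = -∫ x in Ω, f x * pd i φ x
/-- `J` is the distributional Jacobian of `v` on `Ω`. -/
def WkJacIn (Ω : Set Vec) (v : Vec → Vec) (J : Vec → Mat) : Prop :=
  ∀ a b, WkPDIn Ω b (fun x => v x a) fun x => J x a b
/-- `g = ∂^α f` (`α` a list of directions) in the sense of distributions on `Ω`. -/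
def WkIterIn (Ω : Set Vec) (l : List (Fin 3)) (f g : Vec → ℝ) : Prop :=
  ∀ φ, TestS φ → tsupport φ ⊆ Ω →
    ∫ x in Ω, g x * φ x = (-1 : ℝ) ^ l.length * ∫ x in Ω, f x * pdIter l φ x
/-- `div v = 0` in the sense of distributions on `Ω`. -/
def WkDivFree (Ω : Set Vec) (v : Vec → Vec) : Prop :=
  ∀ φ, TestS φ → tsupport φ ⊆ Ω → ∫ x in Ω, dot3 (v x) (grad3 φ x) = 0

/-- scalar `H₀¹(Ω)` (via zero extension), with weak gradient `g`. -/
def MemH01S (Ω : Set Vec) (f : Vec → ℝ) (g : Vec → Vec) : Prop :=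
  MemL2S Ω f ∧ MemL2V Ω g ∧ ∀ i, WkPD i (zextS Ω f) fun x => zextV Ω g x i
/-- `H₀(curl,Ω)` (via zero extension), with weak curl `cv`. -/
def MemH0Curl (Ω : Set Vec) (v cv : Vec → Vec) : Prop :=
  MemL2V Ω v ∧ MemL2V Ω cv ∧ WkCurlAll (zextV Ω v) (zextV Ω cv)
/-- `H₀(div,Ω)` (via zero extension), with weak divergence `d`. -/
def MemH0Div (Ω : Set Vec) (v : Vec → Vec) (d : Vec → ℝ) : Prop :=
  MemL2V Ω v ∧ MemL2S Ω d ∧ WkDivAll (zextV Ω v) (zextS Ω d)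
/-- vector `H₀¹(Ω;ℝ³)` (via zero extension), with weak Jacobian `J`. -/
def MemH01V (Ω : Set Vec) (v : Vec → Vec) (J : Vec → Mat) : Prop :=
  MemL2V Ω v ∧ (∀ a b, MemL2S Ω fun x => J x a b) ∧
    ∀ a b, WkPD b (zextS Ω fun x => v x a) (zextS Ω fun x => J x a b)
/-- `H₀(grad curl, Ω)`: `u ∈ H₀(curl)` with `curl u = cu ∈ H₀¹(Ω;ℝ³)`, `J = ∇cu`. -/
def MemH0GC (Ω : Set Vec) (u cu : Vec → Vec) (J : Vec → Mat) : Prop :=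
  MemH0Curl Ω u cu ∧ MemH01V Ω cu J

/-- membership in `H^j(Ω)` componentwise via iterated distributional derivatives `D`,
indexed by multi-indices `α : Fin j → Fin 3` and components `c : Fin 3`. -/
def MemHiter (Ω : Set Vec) (j : ℕ) (v : Vec → Vec)
    (D : (Fin j → Fin 3) → Fin 3 → Vec → ℝ) : Prop :=
  ∀ α c, WkIterIn Ω (List.ofFn α) (fun x => v x c) (D α c) ∧ MemL2S Ω (D α c)
/-- the `H^j(Ω)` seminorm built from the iterated derivatives `D`. -/
def semiIter (Ω : Set Vec) (j : ℕ) (D : (Fin j → Fin 3) → Fin 3 → Vec → ℝ) : ℝ :=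
  Real.sqrt (∑ α : Fin j → Fin 3, ∑ c : Fin 3, ∫ x in Ω, (D α c x) ^ 2)
/-- the `H¹(Ω)` seminorm of a vector field with Jacobian `J`. -/
def semiJ (Ω : Set Vec) (J : Vec → Mat) : ℝ := Real.sqrt (∫ x in Ω, nsqM (J x))

/-- the `H^s(Ω)` seminorm, `1 ≤ s ≤ 2`, of a vector field with Jacobian `J` and second
derivatives `D2`; for `1 < s < 2` the Sobolev–Slobodeckij seminorm of the gradient. -/
def semiHsVec (Ω : Set Vec) (s : ℝ) (J : Vec → Mat)
    (D2 : (Fin 2 → Fin 3) → Fin 3 → Vec → ℝ) : ℝ :=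
  if s = 1 then semiJ Ω J
  else if s = 2 then semiIter Ω 2 D2
  else Real.sqrt (∑ a : Fin 3, ∑ b : Fin 3,
    ∫ x in Ω, ∫ y in Ω, (J x a b - J y a b) ^ 2 / dist x y ^ (3 + 2 * (s - 1)))
/-- membership in `H^s(Ω;ℝ³)`, `1 ≤ s ≤ 2`, with data `(J, D2)`. -/
def MemHsVec (Ω : Set Vec) (s : ℝ) (v : Vec → Vec) (J : Vec → Mat)
    (D2 : (Fin 2 → Fin 3) → Fin 3 → Vec → ℝ) : Prop :=
  WkJacIn Ω v J ∧ (∀ a b, MemL2S Ω fun x => J x a b) ∧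
  (s = 2 → MemHiter Ω 2 v D2) ∧
  (1 < s → s < 2 → ∀ a b, Integrable
    (fun p : Vec × Vec => (J p.1 a b - J p.2 a b) ^ 2 / dist p.1 p.2 ^ (3 + 2 * (s - 1)))
    ((volume.restrict Ω).prod (volume.restrict Ω)))

/-! ### The continuous problems -/

/-- weak solution of the quad-curl singular perturbation problem
`ε² curl⁴u + curl²u = f`, `div u = 0`, `u × n = curl u = 0` on `∂Ω`
(mixed formulation with multiplier `λ = 0`): here `cu = curl u`, `J = ∇curl u`. -/
def IsQuadCurlSol (Ω : Set Vec) (ε : ℝ) (f u cu : Vec → Vec) (J : Vec → Mat) : Prop :=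
  MemH0GC Ω u cu J ∧ WkDivFree Ω u ∧
  ∀ v cv Jv, MemH0GC Ω v cv Jv →
    ε ^ 2 * (∫ x in Ω, dotM (J x) (Jv x)) + (∫ x in Ω, dot3 (cu x) (cv x))
      = ∫ x in Ω, dot3 (f x) (v x)

/-- weak solution of the reduced double curl problem
`curl²u₀ = f`, `div u₀ = 0`, `u₀ × n = 0` on `∂Ω`; here `cu0 = curl u₀`. -/
def IsReducedSol (Ω : Set Vec) (f u0 cu0 : Vec → Vec) : Prop :=
  MemH0Curl Ω u0 cu0 ∧ WkDivFree Ω u0 ∧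
  ∀ v cv, MemH0Curl Ω v cv →
    (∫ x in Ω, dot3 (cu0 x) (cv x)) = ∫ x in Ω, dot3 (f x) (v x)

/-- the continuous mixed formulation: `u ∈ H₀(grad curl)`, `λ ∈ H₀¹`,
`ε²a(u,v) + b(u,v) + c(v,λ) = (f,v)` and `c(u,μ) = 0`. -/
def MixedSol (Ω : Set Vec) (ε : ℝ) (f u cu : Vec → Vec) (J : Vec → Mat)
    (lam : Vec → ℝ) (glam : Vec → Vec) : Prop :=
  MemH0GC Ω u cu J ∧ MemH01S Ω lam glam ∧
  (∀ v cv Jv, MemH0GC Ω v cv Jv →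
    ε ^ 2 * (∫ x in Ω, dotM (J x) (Jv x)) + (∫ x in Ω, dot3 (cu x) (cv x))
      + (∫ x in Ω, dot3 (v x) (glam x)) = ∫ x in Ω, dot3 (f x) (v x)) ∧
  (∀ μ gμ, MemH01S Ω μ gμ → ∫ x in Ω, dot3 (u x) (gμ x) = 0)

/-! ### Discrete methods -/

/-- the mixed finite element method (4.1)-(4.2). -/
def DiscMixedSol (k : ℕ) (M : Mesh) (Ω : Set Vec) (ε : ℝ) (f : Vec → Vec)
    (u : DiscVF M) (lam : DiscSF M) : Prop :=
  MemWh0 k M Ω u ∧ MemVhg k M Ω lam ∧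
  (∀ v, MemWh0 k M Ω v → ε ^ 2 * ah M u v + bh M u v + ch M v lam = fpair M f v) ∧
  (∀ μ, MemVhg k M Ω μ → ch M u μ = 0)

/-- the Nitsche-modified mixed finite element method (5.1)-(5.2). -/
def DiscNitscheSol (k : ℕ) (M : Mesh) (Ω : Set Vec) (σ ε : ℝ) (f : Vec → Vec)
    (u : DiscVF M) (lam : DiscSF M) : Prop :=
  MemWh k M Ω u ∧ MemVhg k M Ω lam ∧
  (∀ v, MemWh k M Ω v →
    ε ^ 2 * atildeD σ M Ω u v + bh M u v + ch M v lam = fpair M f v) ∧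
  (∀ μ, MemVhg k M Ω μ → ch M u μ = 0)

/-! ### Falk–Winther projections and derived interpolation operators -/

/-- The Falk–Winther local bounded commuting projections onto the Lagrange, Nédélec and
BDM spaces, together with the properties used in the paper. `avg` plays the role of the
projection `Q_h` onto piecewise constants. -/
structure FW (k : ℕ) (M : Mesh) (Ω : Set Vec) where
  Ig : (Vec → ℝ) → DiscSF M
  IND : (Vec → Vec) → DiscVF M
  IBDM : (Vec → Vec) → DiscVF M
  mapsIg : ∀ v gv, MemH01S Ω v gv → MemVhg k M Ω (Ig v)
  mapsIND : ∀ v cv, MemH0Curl Ω v cv → MemVND k M Ω (IND v)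
  mapsIBDM : ∀ v dv, MemH0Div Ω v dv → MemVBDM M Ω (IBDM v)
  zeroIBDM : ∀ i x, IBDM (fun _ => (0 : Vec)) i x = 0
  comm_grad : ∀ v gv, MemH01S Ω v gv → ∀ i, ∀ x ∈ (M.el i).K, IND gv i x = grad3 (Ig v i) x
  comm_curl : ∀ v cv, MemH0Curl Ω v cv → ∀ i, ∀ x ∈ (M.el i).K, IBDM cv i x = curl3 (IND v i) x
  comm_div : ∀ v dv, MemH0Div Ω v dv → ∀ i, ∀ x ∈ (M.el i).K, div3 (IBDM v i) x = avg M dv i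

/-- DoF-matching conditions defining the interpolations `I_{h0}^d`, `I_h^d` into the
Tai–Winther spaces relative to a given piecewise field `B` (namely `I_h^{BDM}v`): the
normal face DoFs match, and on interior faces the tangential DoFs match the face average. -/
def MatchIdInt (M : Mesh) (B w : DiscVF M) : Prop :=
  (∀ i a, ∀ q, PolyDeg 1 q → faceNorMoment (M.el i) a (w i) q = faceNorMoment (M.el i) a (B i) q) ∧
  (∀ i j a b, i ≠ j → (M.el i).face a = (M.el j).face b →
    ∀ q, MemRT ((M.el i).outNormal a) q →
      faceTanMoment (M.el i) a (w i) q
        = (faceTanMoment (M.el i) a (B i) q + faceTanMoment (M.el i) a (B j) q) / 2)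

/-- `w = I_{h0}^d v` where `B = I_h^{BDM} v`. -/
def IsId0 (M : Mesh) (Ω : Set Vec) (B w : DiscVF M) : Prop :=
  MemVh0d M Ω w ∧ MatchIdInt M B w

/-- `w = I_h^d v` where `B = I_h^{BDM} v`: additionally the tangential DoFs on boundary
faces match those of `B`. -/
def IsId (M : Mesh) (Ω : Set Vec) (B w : DiscVF M) : Prop :=
  MemVhd M Ω w ∧ MatchIdInt M B w ∧
  ∀ i a, (M.el i).face a ⊆ frontier Ω →
    ∀ q, MemRT ((M.el i).outNormal a) q →
      faceTanMoment (M.el i) a (w i) q = faceTanMoment (M.el i) a (B i) q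

/-- DoF-matching conditions defining `I_{h0}^{gc}`, `I_h^{gc}` relative to a given
piecewise field `N` (namely `I_h^{ND}v`). -/
def MatchIgcInt (k : ℕ) (M : Mesh) (N w : DiscVF M) : Prop :=
  (∀ i a b, a ≠ b → ∀ q, PolyDeg k q →
     edgeMoment (M.el i) a b (w i) q = edgeMoment (M.el i) a b (N i) q) ∧
  (∀ i a, ∀ q, MemRM k ((M.el i).outNormal a) q →
     faceTanMoment (M.el i) a (w i) q = faceTanMoment (M.el i) a (N i) q) ∧
  (∀ i j a b, i ≠ j → (M.el i).face a = (M.el j).face b →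
    ∀ q, MemRT ((M.el i).outNormal a) q →
      faceTanMoment (M.el i) a (curl3 (w i)) q
        = (faceTanMoment (M.el i) a (curl3 (N i)) q + faceTanMoment (M.el i) a (curl3 (N j)) q) / 2)

/-- `w = I_{h0}^{gc} v` where `N = I_h^{ND} v`. -/
def IsIgc0 (k : ℕ) (M : Mesh) (Ω : Set Vec) (N w : DiscVF M) : Prop :=
  MemWh0 k M Ω w ∧ MatchIgcInt k M N w

/-- `w = I_h^{gc} v` where `N = I_h^{ND} v`. -/
def IsIgc (k : ℕ) (M : Mesh) (Ω : Set Vec) (N w : DiscVF M) : Prop :=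
  MemWh k M Ω w ∧ MatchIgcInt k M N w ∧
  ∀ i a, (M.el i).face a ⊆ frontier Ω →
    ∀ q, MemRT ((M.el i).outNormal a) q →
      faceTanMoment (M.el i) a (curl3 (w i)) q = faceTanMoment (M.el i) a (curl3 (N i)) q

/-- `B` maps `H₀(div,Ω)` into the BDM space. -/
def BDMmaps (M : Mesh) (Ω : Set Vec) (B : (Vec → Vec) → DiscVF M) : Prop :=
  ∀ v dv, MemH0Div Ω v dv → MemVBDM M Ω (B v)
/-- the Falk–Winther `L²`-bound `‖I_h^{BDM}v‖₀ ≲ ‖v‖₀ + h‖div v‖₀`. -/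
def BDMbound (M : Mesh) (Ω : Set Vec) (B : (Vec → Vec) → DiscVF M) (C₀ : ℝ) : Prop :=
  ∀ v dv, MemH0Div Ω v dv → L2d M (B v) ≤ C₀ * (L2VΩ Ω v + M.hsize * L2SΩ Ω dv)
/-- the elementwise Falk–Winther error estimates
`Σ_K h_K^{2(i-j)} |v - I_h^{BDM}v|²_{i,K} ≲ |v|_j²` for `i = 0,1`, `j = 1,2`. -/
def BDMest (M : Mesh) (Ω : Set Vec) (B : (Vec → Vec) → DiscVF M) (C₀ : ℝ) : Prop :=
  (∀ v dv Jv, MemH0Div Ω v dv → WkJacIn Ω v Jv →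
     (∑ i, (Metric.diam (M.el i).K) ^ (-2 : ℝ) * ∫ x in (M.el i).K, nsq3 (v x - B v i x))
       + (∑ i, ∫ x in (M.el i).K, nsqM (Jv x - jac3 (B v i) x)) ≤ C₀ * (semiJ Ω Jv) ^ 2) ∧
  (∀ v dv Jv D2, MemH0Div Ω v dv → WkJacIn Ω v Jv → MemHiter Ω 2 v D2 →
     (∑ i, (Metric.diam (M.el i).K) ^ (-4 : ℝ) * ∫ x in (M.el i).K, nsq3 (v x - B v i x))
       + (∑ i, (Metric.diam (M.el i).K) ^ (-2 : ℝ) * ∫ x in (M.el i).K, nsqM (Jv x - jac3 (B v i) x))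
       ≤ C₀ * (semiIter Ω 2 D2) ^ 2)

/-! ### Subspaces for the dimension count -/

/-- the subspace `∇P_{k+1}` of vector fields. -/
def gradSpace (k : ℕ) : Submodule ℝ (Vec → Vec) :=
  Submodule.span ℝ {v | ∃ q, PolyDeg (k + 1) q ∧ v = fun x => grad3 q x}
/-- the subspace `x × P₁(ℝ³;ℝ³)`. -/
def crossSpace : Submodule ℝ (Vec → Vec) :=
  Submodule.span ℝ {v | ∃ p, VPolyDeg 1 p ∧ v = fun x => cross3 x (p x)}
/-- the subspace `b_K P₁(ℝ³;ℝ³)`. -/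
def bubbleSpace (T : Tetra) : Submodule ℝ (Vec → Vec) :=
  Submodule.span ℝ {v | ∃ b r, T.IsBubble b ∧ VPolyDeg 1 r ∧ v = fun x => b x • r x}

/-!
An element `w` of the local space `W_k(K)` is a Nédélec field plus a bubble field `b r` with `r`
affine. The bubble vanishes on `∂K`, so unisolvence of the Nédélec edge and face moments identifies
the Nédélec part with `N = I_h^{ND} v`. On a face, the tangential trace of `curl (b r)` is that of a
face bubble times `n × (n × r)`, so its Raviart–Thomas moments determine `r`, while its normal trace
vanishes. Hence an element `y` of `V^d(K)` is likewise `B + curl (b r')` with `B = I_h^{BDM} v`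
determined by the normal moments and `r'` by the tangential ones.

A face of the mesh that is not shared by two elements lies on `∂Ω`, so all curl-trace moments are
prescribed.
* For `v = ∇φ` the prescribed values are zero because `curl N = I_h^{BDM} 0 = 0`, whence `r = 0` and
  `w = N = ∇ I_h^g φ`.
* The fields `y = I_h^d (curl v)` and `curl w = curl N + curl (b r)` share the part
  `I_h^{BDM} (curl v) = curl N` and all tangential moments, whence `r = r'`.
* Taking the divergence removes `curl (b r')`, leaving `div B = Q_h (div v)`.
-/

/-! ### Integration over affine images -/

/-- Transporting a Haar measure to the range of `L` gives a Haar measure there, as is the Hausdorff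
measure; so no Jacobian needs to be computed. -/
theorem exists_setIntegral_image_affine_eq {E G : Type*}
    [NormedAddCommGroup E] [NormedSpace ℝ E] [FiniteDimensional ℝ E] [MeasurableSpace E]
    [BorelSpace E] [NormedAddCommGroup G] [NormedSpace ℝ G] [MeasurableSpace G] [BorelSpace G]
    (μ : Measure E) [μ.IsAddHaarMeasure] {d : ℝ} (hd : (Module.finrank ℝ E : ℝ) = d)
    {L : E →ₗ[ℝ] G} (hL : Function.Injective L) (p : G) :
    ∃ c : ℝ, c ≠ 0 ∧ ∀ (S : Set E) (g : G → ℝ),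
      ∫ x in (fun s => p + L s) '' S, g x ∂μH[d] = c * ∫ s in S, g (p + L s) ∂μ := by
  subst hd
  let e : E ≃L[ℝ] L.range := (LinearEquiv.ofInjective L hL).toContinuousLinearEquiv
  let ι : L.range → G := fun y => p + y
  have hι : Isometry ι := (IsometryEquiv.addLeft p).isometry.comp isometry_subtype_coe
  have hemb : MeasurableEmbedding fun s => p + L s :=
    hι.isClosedEmbedding.measurableEmbedding.comp e.toHomeomorph.measurableEmbedding
  set ν : Measure L.range := μH[Module.finrank ℝ L.range]
  set c := (μ.map e).addHaarScalarFactor ν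
  have hc : c ≠ 0 := (Measure.addHaarScalarFactor_pos_of_isAddHaarMeasure _ _).ne'
  have hmap : μ.map (fun s => p + L s)
      = c • μH[Module.finrank ℝ E].restrict (Set.range fun s => p + L s) := by
    have hrange : Set.range ι = Set.range fun s => p + L s := (e.surjective.range_comp ι).symm
    calc μ.map (fun s => p + L s) = (μ.map e).map ι :=
          (Measure.map_map hι.continuous.measurable e.continuous.measurable).symm
      _ = c • ν.map ι := by rw [Measure.isAddLeftInvariant_eq_smul (μ.map e) ν, Measure.map_smul]
      _ = _ := by
        rw [hι.map_hausdorffMeasure (Or.inl (Nat.cast_nonneg _)), hrange,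
          LinearMap.finrank_range_of_inj hL]
  refine ⟨(c : ℝ)⁻¹, inv_ne_zero (NNReal.coe_ne_zero.2 hc), fun S g => ?_⟩
  have hint := hemb.setIntegral_map (μ := μ) g ((fun s => p + L s) '' S)
  rw [hmap, Set.preimage_image_eq _ hemb.injective, Measure.restrict_smul,
    Measure.restrict_restrict_of_subset (Set.image_subset_range _ _),
    integral_smul_nnreal_measure] at hint
  rw [← hint, NNReal.smul_def, smul_eq_mul, inv_mul_cancel_left₀ (NNReal.coe_ne_zero.2 hc)]

/-! ### Polynomials -/

theorem polyDeg_const (n : ℕ) (c : ℝ) : PolyDeg n fun _ => c :=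
  ⟨MvPolynomial.C c, by simp, fun x => by simp⟩

theorem polyDeg_coord (i : Fin 3) : PolyDeg 1 fun x => x i :=
  ⟨MvPolynomial.X i, by simp, fun x => by simp⟩

namespace PolyDeg

variable {n m : ℕ} {f g : Vec → ℝ}

theorem mono (hf : PolyDeg n f) (h : n ≤ m) : PolyDeg m f := by
  obtain ⟨p, hp, hf⟩ := hf
  exact ⟨p, hp.trans h, hf⟩

theorem add (hf : PolyDeg n f) (hg : PolyDeg n g) : PolyDeg n fun x => f x + g x := by
  obtain ⟨p, hp, hf⟩ := hf
  obtain ⟨q, hq, hg⟩ := hg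
  exact ⟨p + q, (p.totalDegree_add q).trans (max_le hp hq), fun x => by simp [hf, hg]⟩

theorem mul (hf : PolyDeg n f) (hg : PolyDeg m g) : PolyDeg (n + m) fun x => f x * g x := by
  obtain ⟨p, hp, hf⟩ := hf
  obtain ⟨q, hq, hg⟩ := hg
  exact ⟨p * q, (p.totalDegree_mul q).trans (add_le_add hp hq), fun x => by simp [hf, hg]⟩

theorem const_mul (c : ℝ) (hf : PolyDeg n f) : PolyDeg n fun x => c * f x := by
  simpa only [zero_add] using (polyDeg_const 0 c).mul hf

theorem sub (hf : PolyDeg n f) (hg : PolyDeg n g) : PolyDeg n fun x => f x - g x := by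
  simpa only [neg_one_mul, ← sub_eq_add_neg] using hf.add (hg.const_mul (-1))

theorem sum {ι : Type*} {s : Finset ι} {F : ι → Vec → ℝ} (hF : ∀ i ∈ s, PolyDeg n (F i)) :
    PolyDeg n fun x => ∑ i ∈ s, F i x := by
  have := Finset.sum_induction F (PolyDeg n) (fun _ _ => add) (polyDeg_const n 0) hF
  simpa only [Finset.sum_fn] using this

theorem prod {ι : Type*} {s : Finset ι} {F : ι → Vec → ℝ} (hF : ∀ i ∈ s, PolyDeg 1 (F i)) :
    PolyDeg s.card fun x => ∏ i ∈ s, F i x := by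
  induction s using Finset.induction_on with
  | empty => simpa using polyDeg_const 0 1
  | insert i s hi ih =>
    simp only [Finset.prod_insert hi, Finset.card_insert_of_notMem hi, Nat.add_comm s.card]
    exact (hF i (s.mem_insert_self i)).mul (ih fun j hj => hF j (Finset.mem_insert_of_mem hj))

theorem contDiff (hf : PolyDeg n f) {r : WithTop ℕ∞} : ContDiff ℝ r f := by
  obtain ⟨p, -, hf⟩ := hf
  rw [funext hf]
  clear hf
  induction p using MvPolynomial.induction_on with
  | C a => simpa using contDiff_const
  | add p q hp hq => simpa using hp.add hq
  | mul_X p i hp => simpa using hp.mul (contDiff_apply ℝ ℝ i)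

theorem continuous (hf : PolyDeg n f) : Continuous f :=
  (hf.contDiff (r := 0)).continuous

theorem differentiable (hf : PolyDeg n f) : Differentiable ℝ f :=
  hf.contDiff.differentiable one_ne_zero

/-- A nonconstant monomial is a coordinate times a monomial of smaller degree. -/
theorem succ_induction {motive : (Vec → ℝ) → Prop} (const : ∀ c, motive fun _ => c)
    (add : ∀ f g, motive f → motive g → motive fun x => f x + g x)
    (coord_mul : ∀ i g, PolyDeg n g → motive fun x => x i * g x) (hf : PolyDeg (n + 1) f) :
    motive f := by
  obtain ⟨p, hp, hf⟩ := hf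
  have hsum : f = ∑ s ∈ p.support, fun x => (MvPolynomial.monomial s (p.coeff s)).eval x := by
    ext x
    rw [hf, Finset.sum_apply, ← map_sum, ← p.as_sum]
  rw [hsum]
  refine Finset.sum_induction _ motive add (const 0) fun s hs => ?_
  obtain rfl | hs0 := eq_or_ne s 0
  · simpa using const (p.coeff 0)
  obtain ⟨i, hi⟩ := Finsupp.ne_iff.1 hs0
  have hsplit : Finsupp.single i 1 + (s - Finsupp.single i 1) = s :=
    add_tsub_cancel_of_le (Finsupp.single_le_iff.2 (Nat.one_le_iff_ne_zero.2 hi))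
  have hdeg : (s - Finsupp.single i 1).degree ≤ n := by
    have hsn : s.degree ≤ n + 1 := (p.le_totalDegree hs).trans hp
    rw [← hsplit, map_add, Finsupp.degree_single] at hsn
    omega
  have hmon : MvPolynomial.monomial s (p.coeff s)
      = MvPolynomial.X i * MvPolynomial.monomial (s - Finsupp.single i 1) (p.coeff s) := by
    rw [MvPolynomial.X, MvPolynomial.monomial_mul, one_mul, hsplit]
  simp only [hmon, map_mul, MvPolynomial.eval_X]
  exact coord_mul i _ ⟨_, (MvPolynomial.totalDegree_monomial_le _ _).trans hdeg, fun _ => rfl⟩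

theorem zero_iff : PolyDeg 0 f ↔ ∃ c, f = fun _ => c := by
  refine ⟨fun ⟨p, hp, hf⟩ => ⟨p.coeff 0, funext fun x => ?_⟩, ?_⟩
  · rw [hf, MvPolynomial.totalDegree_eq_zero_iff_eq_C.1 (Nat.le_zero.1 hp)]
    simp
  · rintro ⟨c, rfl⟩
    exact polyDeg_const 0 c

theorem one_iff : PolyDeg 1 f ↔ ∃ A : Vec →ᵃ[ℝ] ℝ, f = A := by
  refine ⟨fun hf => ?_, ?_⟩
  · refine hf.succ_induction (motive := fun f => ∃ A : Vec →ᵃ[ℝ] ℝ, f = A)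
      (fun c => ⟨AffineMap.const ℝ Vec c, rfl⟩) ?_ fun i g hg => ?_
    · rintro _ _ ⟨A, rfl⟩ ⟨B, rfl⟩
      exact ⟨A + B, rfl⟩
    · obtain ⟨c, rfl⟩ := zero_iff.1 hg
      exact ⟨(c • LinearMap.proj (R := ℝ) i).toAffineMap, funext fun x => mul_comm _ _⟩
  · rintro ⟨A, rfl⟩
    have hA : ⇑A = fun x => (∑ i, A.linear (fun j => if i = j then 1 else 0) * x i) + A 0 := by
      ext x
      rw [congrFun A.decomp x, Pi.add_apply, A.linear.pi_apply_eq_sum_univ x]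
      simp only [smul_eq_mul, mul_comm]
    rw [hA]
    exact (sum fun i _ => (polyDeg_coord i).const_mul _).add (polyDeg_const 1 _)

theorem affine_interpolation {ι : Type*} [Fintype ι] (hf : PolyDeg 1 f) (v : ι → Vec) {l : ι → ℝ}
    (hl : ∑ a, l a = 1) : f (∑ a, l a • v a) = ∑ a, l a * f (v a) := by
  obtain ⟨A, rfl⟩ := one_iff.1 hf
  have hA : ∀ x, A x = A.linear x + A 0 := congrFun A.decomp
  generalize A 0 = c at hA
  simp only [hA, map_sum, map_smul, smul_eq_mul, mul_add, Finset.sum_add_distrib,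
    ← Finset.sum_mul, hl, one_mul]

end PolyDeg

theorem sum_mul_sum_eq_midpoint_values {ι : Type*} [Fintype ι] (u w : ι → ℝ) {l : ι → ℝ}
    (hl : ∑ a, l a = 1) :
    (∑ a, l a * u a) * (∑ a, l a * w a)
      = 2 * ∑ a, ∑ b, l a * l b * ((u a + u b) / 2 * ((w a + w b) / 2))
        - ∑ a, l a * (u a * w a) := by
  have hinner : ∀ a, ∑ b, l a * l b * ((u a + u b) / 2 * ((w a + w b) / 2))
      = (l a * (u a * w a) + (l a * u a) * ∑ b, l b * w b + (l a * w a) * (∑ b, l b * u b)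
        + l a * ∑ b, l b * (u b * w b)) / 4 := by
    intro a
    calc _ = ∑ b, (l a * (u a * w a) * l b + (l a * u a) * (l b * w b)
          + (l a * w a) * (l b * u b) + l a * (l b * (u b * w b))) / 4 :=
          Finset.sum_congr rfl fun b _ => by ring
      _ = _ := by
        simp only [← Finset.sum_div, Finset.sum_add_distrib, ← Finset.mul_sum, hl, mul_one]
  simp only [hinner, ← Finset.sum_div, Finset.sum_add_distrib, ← Finset.sum_mul, hl, one_mul]
  ring

namespace PolyDeg

variable {n : ℕ} {f g : Vec → ℝ}

theorem quadratic_interpolation {ι : Type*} [Fintype ι] (hf : PolyDeg 2 f) (v : ι → Vec)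
    {l : ι → ℝ} (hl : ∑ a, l a = 1) :
    f (∑ a, l a • v a)
      = 2 * ∑ a, ∑ b, l a * l b * f (midpoint ℝ (v a) (v b)) - ∑ a, l a * f (v a) := by
  refine hf.succ_induction (motive := fun f => f (∑ a, l a • v a)
      = 2 * ∑ a, ∑ b, l a * l b * f (midpoint ℝ (v a) (v b)) - ∑ a, l a * f (v a))
    (fun c => ?_) (fun f g hf hg => ?_) fun i g hg => ?_
  · simp only [← Finset.sum_mul, ← Finset.mul_sum, hl]
    ring
  · simp only [hf, hg, mul_add, Finset.sum_add_distrib]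
    ring
  · obtain ⟨A, rfl⟩ := one_iff.1 hg
    have hmid : ∀ a b, A (midpoint ℝ (v a) (v b)) = (A (v a) + A (v b)) / 2 := fun a b => by
      rw [A.map_midpoint, midpoint_eq_smul_add, invOf_eq_inv, smul_eq_mul, inv_mul_eq_div]
    have hmid_coord : ∀ a b, midpoint ℝ (v a) (v b) i = (v a i + v b i) / 2 := fun a b => by
      rw [midpoint_eq_smul_add, invOf_eq_inv, Pi.smul_apply, Pi.add_apply, smul_eq_mul,
        inv_mul_eq_div]
    simp only [hmid, hmid_coord]
    rw [affine_interpolation hg v hl, affine_interpolation (polyDeg_coord i) v hl]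
    exact sum_mul_sum_eq_midpoint_values (fun a => v a i) (fun a => A (v a)) hl

theorem eq_of_eq_on_basis {ι : Type*} [Finite ι] (b : AffineBasis ι ℝ Vec) (hf : PolyDeg 1 f)
    (hg : PolyDeg 1 g) (h : ∀ i, f (b i) = g (b i)) : f = g := by
  cases nonempty_fintype ι
  ext x
  rw [← b.linear_combination_coord_eq_self x,
    affine_interpolation hf b (b.sum_coord_apply_eq_one x),
    affine_interpolation hg b (b.sum_coord_apply_eq_one x)]
  simp only [h]

theorem eq_zero_of_midpoint_eq_zero {ι : Type*} [Finite ι] (b : AffineBasis ι ℝ Vec)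
    (hf : PolyDeg 2 f) (h : ∀ i j, f (midpoint ℝ (b i) (b j)) = 0) : f = 0 := by
  cases nonempty_fintype ι
  have hvertex : ∀ i, f (b i) = 0 := fun i => by simpa only [midpoint_self] using h i i
  ext x
  rw [← b.linear_combination_coord_eq_self x,
    quadratic_interpolation hf b (b.sum_coord_apply_eq_one x)]
  simp [h, hvertex]

end PolyDeg

/-! ### Vector algebra in three dimensions -/

theorem dot3_eq_dotProduct (u v : Vec) : dot3 u v = u ⬝ᵥ v := rfl

theorem cross3_eq_crossProduct (u v : Vec) : cross3 u v = crossProduct u v :=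
  (cross_apply u v).symm

theorem dot3_comm (u v : Vec) : dot3 u v = dot3 v u := dotProduct_comm u v

theorem dot3_add_left (u v w : Vec) : dot3 (u + v) w = dot3 u w + dot3 v w := add_dotProduct u v w

theorem dot3_add_right (u v w : Vec) : dot3 u (v + w) = dot3 u v + dot3 u w := dotProduct_add u v w

theorem dot3_sub_left (u v w : Vec) : dot3 (u - v) w = dot3 u w - dot3 v w := sub_dotProduct u v w

theorem dot3_sub_right (u v w : Vec) : dot3 u (v - w) = dot3 u v - dot3 u w := dotProduct_sub u v w

theorem dot3_smul_left (c : ℝ) (u v : Vec) : dot3 (c • u) v = c * dot3 u v := smul_dotProduct c u v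

theorem dot3_smul_right (c : ℝ) (u v : Vec) : dot3 u (c • v) = c * dot3 u v := dotProduct_smul c u v

theorem dot3_zero_left (v : Vec) : dot3 0 v = 0 := zero_dotProduct v

theorem dot3_zero_right (v : Vec) : dot3 v 0 = 0 := by
  rw [dot3_comm, dot3_zero_left]

theorem dot3_sum_left {ι : Type*} (s : Finset ι) (u : ι → Vec) (v : Vec) :
    dot3 (∑ i ∈ s, u i) v = ∑ i ∈ s, dot3 (u i) v := sum_dotProduct s u v

theorem dot3_sum_right {ι : Type*} (s : Finset ι) (u : Vec) (v : ι → Vec) :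
    dot3 u (∑ i ∈ s, v i) = ∑ i ∈ s, dot3 u (v i) := dotProduct_sum u s v

theorem dot3_self_eq_zero {v : Vec} : dot3 v v = 0 ↔ v = 0 := dotProduct_self_eq_zero

theorem dot3_self_nonneg (v : Vec) : 0 ≤ dot3 v v :=
  Finset.sum_nonneg fun i _ => mul_self_nonneg (v i)

theorem cross3_sub_left (u v w : Vec) : cross3 (u - v) w = cross3 u w - cross3 v w := by
  simp only [cross3_eq_crossProduct, map_sub, LinearMap.sub_apply]

theorem cross3_smul_left (c : ℝ) (u v : Vec) : cross3 (c • u) v = c • cross3 u v := by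
  simp only [cross3_eq_crossProduct, map_smul, LinearMap.smul_apply]

theorem dot3_cross3_self (u v : Vec) : dot3 (cross3 u v) u = 0 := by
  rw [dot3_comm, cross3_eq_crossProduct, dot3_eq_dotProduct, dot_self_cross]

theorem dot3_cross3_self_right (u v : Vec) : dot3 (cross3 u v) v = 0 := by
  rw [dot3_comm, cross3_eq_crossProduct, dot3_eq_dotProduct, dot_cross_self]

theorem dot3_cross3_cross3 (u v w x : Vec) :
    dot3 (cross3 u v) (cross3 w x) = dot3 u w * dot3 v x - dot3 u x * dot3 v w := by
  simp only [cross3_eq_crossProduct, dot3_eq_dotProduct, cross_dot_cross]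

theorem dot3_cross3_cross3_left (u v n q : Vec) :
    dot3 (cross3 (cross3 u v) n) q = dot3 u n * dot3 v q - dot3 v n * dot3 u q := by
  rw [dot3_comm, dot3_eq_dotProduct, cross3_eq_crossProduct, triple_product_permutation,
    ← cross3_eq_crossProduct n, ← dot3_eq_dotProduct, dot3_cross3_cross3]
  ring

/-! ### Partial derivatives, curl and divergence -/

section Calculus

variable {f g : Vec → ℝ} {u v : Vec → Vec} {x : Vec}

theorem pd_add (hf : DifferentiableAt ℝ f x) (hg : DifferentiableAt ℝ g x) (i : Fin 3) :
    pd i (fun y => f y + g y) x = pd i f x + pd i g x := by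
  rw [pd, fderiv_fun_add hf hg]
  rfl

theorem pd_sub (hf : DifferentiableAt ℝ f x) (hg : DifferentiableAt ℝ g x) (i : Fin 3) :
    pd i (fun y => f y - g y) x = pd i f x - pd i g x := by
  rw [pd, fderiv_fun_sub hf hg]
  rfl

theorem pd_mul (hf : DifferentiableAt ℝ f x) (hg : DifferentiableAt ℝ g x) (i : Fin 3) :
    pd i (fun y => f y * g y) x = f x * pd i g x + pd i f x * g x := by
  rw [pd, fderiv_fun_mul hf hg, mul_comm (pd i f x)]
  rfl

theorem pd_const (c : ℝ) (i : Fin 3) : pd i (fun _ => c) x = 0 := by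
  rw [pd, fderiv_fun_const]
  rfl

theorem pd_coord (i j : Fin 3) : pd i (fun y => y j) x = (Pi.single i 1 : Vec) j := by
  simp [pd, fderiv_apply]

theorem pd_affineMap (A : Vec →ᵃ[ℝ] ℝ) (i : Fin 3) : pd i A x = A.linear (Pi.single i 1) := by
  have hA : HasFDerivAt A (LinearMap.toContinuousLinearMap A.linear) x := by
    rw [A.decomp]
    exact (LinearMap.toContinuousLinearMap A.linear).hasFDerivAt.add_const _
  rw [pd, hA.fderiv]
  rfl

theorem curl3_add (hu : DifferentiableAt ℝ u x) (hv : DifferentiableAt ℝ v x) :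
    curl3 (fun y => u y + v y) x = curl3 u x + curl3 v x := by
  rw [differentiableAt_pi] at hu hv
  simp only [curl3, Pi.add_apply, pd_add (hu _) (hv _)]
  ext i
  fin_cases i <;> simp <;> ring

theorem curl3_sub (hu : DifferentiableAt ℝ u x) (hv : DifferentiableAt ℝ v x) :
    curl3 (fun y => u y - v y) x = curl3 u x - curl3 v x := by
  rw [differentiableAt_pi] at hu hv
  simp only [curl3, Pi.sub_apply, pd_sub (hu _) (hv _)]
  ext i
  fin_cases i <;> simp <;> ring

theorem div3_add (hu : DifferentiableAt ℝ u x) (hv : DifferentiableAt ℝ v x) :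
    div3 (fun y => u y + v y) x = div3 u x + div3 v x := by
  rw [differentiableAt_pi] at hu hv
  simp only [div3, Pi.add_apply, pd_add (hu _) (hv _), Finset.sum_add_distrib]

theorem contDiff_pd {m n : WithTop ℕ∞} (hf : ContDiff ℝ n f) (hmn : m + 1 ≤ n) (i : Fin 3) :
    ContDiff ℝ m (pd i f) :=
  (hf.fderiv_right hmn).clm_apply contDiff_const

theorem pd_comm (hf : ContDiff ℝ 2 f) (i j : Fin 3) : pd i (pd j f) x = pd j (pd i f) x := by
  have hsnd : ∀ i j, pd i (pd j f) x = fderiv ℝ (fderiv ℝ f) x (Pi.single i 1) (Pi.single j 1) := by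
    intro i j
    have hd : DifferentiableAt ℝ (fderiv ℝ f) x :=
      (hf.fderiv_right (m := 1) le_rfl).differentiable one_ne_zero x
    change fderiv ℝ (fun y => fderiv ℝ f y (Pi.single j 1)) x (Pi.single i 1) = _
    rw [fderiv_clm_apply hd (differentiableAt_const _)]
    simp
  rw [hsnd, hsnd]
  exact hf.contDiffAt.isSymmSndFDerivAt (by simp) _ _

theorem div3_curl3 (hv : ContDiff ℝ 2 v) : div3 (curl3 v) x = 0 := by
  rw [contDiff_pi] at hv
  have hd : ∀ i j, DifferentiableAt ℝ (pd i fun y => v y j) x := fun i j =>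
    (contDiff_pd (m := 1) (hv j) le_rfl i).differentiable one_ne_zero x
  simp only [div3, Fin.sum_univ_three, curl3, Matrix.cons_val]
  rw [pd_sub (hd _ _) (hd _ _), pd_sub (hd _ _) (hd _ _), pd_sub (hd _ _) (hd _ _),
    pd_comm (hv 2) 0 1, pd_comm (hv 1) 0 2, pd_comm (hv 0) 1 2]
  ring

end Calculus

protected theorem PolyDeg.pd {n : ℕ} {f : Vec → ℝ} (hf : PolyDeg (n + 1) f) (i : Fin 3) :
    PolyDeg n (pd i f) := by
  induction n generalizing f with
  | zero =>
    obtain ⟨A, rfl⟩ := PolyDeg.one_iff.1 hf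
    exact PolyDeg.zero_iff.2 ⟨A.linear (Pi.single i 1), funext fun x => pd_affineMap A i⟩
  | succ n ih =>
    refine (hf.succ_induction
      (motive := fun f => Differentiable ℝ f ∧ PolyDeg (n + 1) fun x => pd i f x)
      (fun c => ?_) (fun f g hf hg => ?_) fun j g hg => ?_).2
    · exact ⟨differentiable_const c, by simpa only [pd_const] using polyDeg_const (n + 1) 0⟩
    · refine ⟨hf.1.add hg.1, ?_⟩
      simpa only [pd_add (hf.1 _) (hg.1 _)] using hf.2.add hg.2
    · have hj := (polyDeg_coord j).differentiable
      refine ⟨hj.mul hg.differentiable, ?_⟩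
      have hpd : pd i (fun x => x j * g x)
          = fun x => x j * pd i g x + (Pi.single i 1 : Vec) j * g x := by
        ext x
        rw [pd_mul (hj x) (hg.differentiable x), pd_coord]
      rw [hpd]
      exact (((polyDeg_coord j).mul (ih hg)).mono (by omega)).add (hg.const_mul _)

namespace VPolyDeg

variable {n m : ℕ} {u v : Vec → Vec}

theorem mono (hv : VPolyDeg n v) (h : n ≤ m) : VPolyDeg m v := fun i => (hv i).mono h

theorem const (n : ℕ) (c : Vec) : VPolyDeg n fun _ => c := fun i => polyDeg_const n (c i)

theorem add (hu : VPolyDeg n u) (hv : VPolyDeg n v) : VPolyDeg n fun x => u x + v x :=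
  fun i => (hu i).add (hv i)

theorem sub (hu : VPolyDeg n u) (hv : VPolyDeg n v) : VPolyDeg n fun x => u x - v x :=
  fun i => (hu i).sub (hv i)

theorem smul {f : Vec → ℝ} (hf : PolyDeg n f) (hv : VPolyDeg m v) :
    VPolyDeg (n + m) fun x => f x • v x :=
  fun i => hf.mul (hv i)

theorem coord : VPolyDeg 1 fun x => x := polyDeg_coord

theorem contDiff (hv : VPolyDeg n v) {r : WithTop ℕ∞} : ContDiff ℝ r v :=
  contDiff_pi.2 fun i => (hv i).contDiff

theorem continuous (hv : VPolyDeg n v) : Continuous v := (hv.contDiff (r := 0)).continuous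

theorem differentiable (hv : VPolyDeg n v) : Differentiable ℝ v :=
  hv.contDiff.differentiable one_ne_zero

protected theorem dot3 (hu : VPolyDeg n u) (hv : VPolyDeg m v) :
    PolyDeg (n + m) fun x => dot3 (u x) (v x) :=
  PolyDeg.sum fun i _ => (hu i).mul (hv i)

protected theorem cross3 (hu : VPolyDeg n u) (hv : VPolyDeg m v) :
    VPolyDeg (n + m) fun x => cross3 (u x) (v x) := by
  intro i
  fin_cases i
  · exact ((hu 1).mul (hv 2)).sub ((hu 2).mul (hv 1))
  · exact ((hu 2).mul (hv 0)).sub ((hu 0).mul (hv 2))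
  · exact ((hu 0).mul (hv 1)).sub ((hu 1).mul (hv 0))

protected theorem curl3 (hv : VPolyDeg (n + 1) v) : VPolyDeg n (curl3 v) := by
  intro i
  fin_cases i
  · exact ((hv 2).pd 1).sub ((hv 1).pd 2)
  · exact ((hv 0).pd 2).sub ((hv 2).pd 0)
  · exact ((hv 1).pd 0).sub ((hv 0).pd 1)

end VPolyDeg

protected theorem PolyDeg.grad3 {n : ℕ} {f : Vec → ℝ} (hf : PolyDeg (n + 1) f) :
    VPolyDeg n (grad3 f) :=
  fun i => hf.pd i

/-! ### The reference triangle -/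

/-- The reference triangle, whose affine images are the faces of a tetrahedron. -/
def refTriangle : Set (ℝ × ℝ) := {s | 0 ≤ s.1 ∧ 0 ≤ s.2 ∧ s.1 + s.2 ≤ 1}

/-- The barycentric coordinates of the reference triangle. -/
def refBary (s : ℝ × ℝ) : Fin 3 → ℝ := ![1 - s.1 - s.2, s.1, s.2]

theorem sum_refBary (s : ℝ × ℝ) : ∑ i, refBary s i = 1 := by
  simp only [refBary, Fin.sum_univ_three, Matrix.cons_val]
  ring

theorem mem_refTriangle_iff {s : ℝ × ℝ} : s ∈ refTriangle ↔ ∀ i, 0 ≤ refBary s i := by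
  simp only [refTriangle, refBary, Set.mem_ofPred_eq, Fin.forall_fin_succ, Matrix.cons_val_zero,
    Matrix.cons_val_succ, IsEmpty.forall_iff, and_true]
  grind

theorem continuous_refBary (i : Fin 3) : Continuous fun s => refBary s i := by
  fin_cases i <;> simp only [refBary, Fin.zero_eta, Fin.mk_one, Fin.reduceFinMk, Matrix.cons_val]
    <;> fun_prop

theorem isClosed_refTriangle : IsClosed refTriangle :=
  (isClosed_le continuous_const continuous_fst).inter
    ((isClosed_le continuous_const continuous_snd).inter
      (isClosed_le (continuous_fst.add continuous_snd) continuous_const))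

theorem isCompact_refTriangle : IsCompact refTriangle :=
  (isCompact_Icc (a := (0 : ℝ × ℝ)) (b := 1)).of_isClosed_subset isClosed_refTriangle
    fun _ h => ⟨⟨h.1, h.2.1⟩, (le_add_of_nonneg_right h.2.1).trans h.2.2,
      (le_add_of_nonneg_left h.1).trans h.2.2⟩

theorem convex_refTriangle : Convex ℝ refTriangle :=
  (convex_halfSpace_ge (LinearMap.fst ℝ ℝ ℝ).isLinear 0).inter
    ((convex_halfSpace_ge (LinearMap.snd ℝ ℝ ℝ).isLinear 0).inter
      (convex_halfSpace_le (LinearMap.fst ℝ ℝ ℝ + LinearMap.snd ℝ ℝ ℝ).isLinear 1))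

theorem refTriangle_subset_closure_interior : refTriangle ⊆ closure (interior refTriangle) := by
  have hopen : IsOpen {s : ℝ × ℝ | 0 < s.1 ∧ 0 < s.2 ∧ s.1 + s.2 < 1} :=
    (isOpen_lt continuous_const continuous_fst).inter
      ((isOpen_lt continuous_const continuous_snd).inter
        (isOpen_lt (continuous_fst.add continuous_snd) continuous_const))
  have hsub : {s : ℝ × ℝ | 0 < s.1 ∧ 0 < s.2 ∧ s.1 + s.2 < 1} ⊆ refTriangle :=
    fun s hs => ⟨hs.1.le, hs.2.1.le, hs.2.2.le⟩
  have hne : (interior refTriangle).Nonempty :=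
    ⟨(1 / 4, 1 / 4), interior_maximal hsub hopen (by norm_num)⟩
  rw [convex_refTriangle.closure_interior_eq_closure_of_nonempty_interior hne]
  exact subset_closure

theorem integrableOn_refTriangle {f : ℝ × ℝ → ℝ} (hf : Continuous f) :
    IntegrableOn f refTriangle :=
  hf.continuousOn.integrableOn_compact isCompact_refTriangle

theorem eqOn_zero_of_setIntegral_mul_self_eq_zero {E : Type*} [TopologicalSpace E]
    [MeasurableSpace E] [OpensMeasurableSpace E] [T2Space E] {μ : Measure E} [μ.IsOpenPosMeasure]
    [IsFiniteMeasureOnCompacts μ] {S : Set E} (hS : IsCompact S) (hS' : S ⊆ closure (interior S))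
    {f : E → ℝ} (hf : ContinuousOn f S) (h : ∫ s in S, f s * f s ∂μ = 0) :
    Set.EqOn f 0 S := by
  have hff : ContinuousOn (fun s => f s * f s) S := hf.mul hf
  rw [integral_eq_zero_iff_of_nonneg (fun s => mul_self_nonneg _)
    (hff.integrableOn_compact hS)] at h
  intro s hs
  exact mul_self_eq_zero.1 (Measure.eqOn_of_ae_eq h hff continuousOn_const hS' hs)

theorem setIntegral_refTriangle_eq {f : ℝ × ℝ → ℝ} (hf : Continuous f) :
    ∫ s in refTriangle, f s = ∫ s in (0 : ℝ)..1, ∫ t in (0 : ℝ)..(1 - s), f (s, t) := by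
  have hmeas := isClosed_refTriangle.measurableSet
  rw [← integral_indicator hmeas, Measure.volume_eq_prod, integral_prod _
    ((integrable_indicator_iff hmeas).2 (integrableOn_refTriangle hf)),
    intervalIntegral.integral_of_le zero_le_one, ← integral_Icc_eq_integral_Ioc,
    ← integral_indicator measurableSet_Icc]
  congr 1 with s
  by_cases hs : s ∈ Set.Icc (0 : ℝ) 1
  · have hslice : (fun t => refTriangle.indicator f (s, t))
        = (Set.Icc 0 (1 - s)).indicator fun t => f (s, t) := by
      ext t
      simp only [Set.indicator, refTriangle, Set.mem_ofPred_eq, Set.mem_Icc, hs.1, true_and,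
        le_sub_iff_add_le']
    rw [Set.indicator_of_mem hs, intervalIntegral.integral_of_le (sub_nonneg.2 hs.2),
      ← integral_Icc_eq_integral_Ioc, hslice, integral_indicator measurableSet_Icc]
  · have hslice : ∀ t, refTriangle.indicator f (s, t) = 0 := fun t =>
      Set.indicator_of_notMem (fun h => hs ⟨h.1, (le_add_of_nonneg_right h.2.1).trans h.2.2⟩) _
    simp only [Set.indicator_of_notMem hs, hslice, integral_zero]

theorem integral_pow_mul_one_sub_pow (a b : ℕ) :
    ∫ s in (0 : ℝ)..1, s ^ a * (1 - s) ^ b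
      = (a.factorial * b.factorial : ℝ) / (a + b + 1).factorial := by
  induction b generalizing a with
  | zero =>
    simp [Nat.factorial_succ]
    field_simp
  | succ b ih =>
    have ha : (a + 1 : ℝ) ≠ 0 := by positivity
    have hu : ∀ s : ℝ, HasDerivAt (fun s => (1 - s) ^ (b + 1)) (-((b + 1) * (1 - s) ^ b)) s :=
      fun s => (((hasDerivAt_id s).const_sub 1).pow (b + 1)).congr_deriv (by simp)
    have hv : ∀ s : ℝ, HasDerivAt (fun s : ℝ => s ^ (a + 1) / (a + 1)) (s ^ a) s := fun s =>
      ((hasDerivAt_pow (a + 1) s).div_const _).congr_deriv (by push_cast; field_simp)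
    have hparts := intervalIntegral.integral_mul_deriv_eq_deriv_mul (a := 0) (b := 1)
      (fun s _ => hu s) (fun s _ => hv s) (Continuous.intervalIntegrable (by fun_prop) _ _)
      (Continuous.intervalIntegrable (by fun_prop) _ _)
    have hrest : ∀ s : ℝ, -((b + 1) * (1 - s) ^ b) * (s ^ (a + 1) / (a + 1))
        = -((b + 1) / (a + 1)) * (s ^ (a + 1) * (1 - s) ^ b) := fun s => by field_simp
    simp only [hrest, intervalIntegral.integral_const_mul, ih, sub_self, zero_pow a.succ_ne_zero,
      zero_pow b.succ_ne_zero, zero_div, mul_zero, zero_mul] at hparts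
    simp only [mul_comm (_ ^ a), hparts, show a + (b + 1) + 1 = a + 1 + b + 1 by ring,
      Nat.factorial_succ a, Nat.factorial_succ b]
    push_cast
    field_simp
    ring

theorem setIntegral_refTriangle_pow_mul_pow (a b : ℕ) :
    ∫ s in refTriangle, s.1 ^ a * s.2 ^ b
      = (a.factorial * b.factorial : ℝ) / (a + b + 2).factorial := by
  have hinner : ∀ s : ℝ, ∫ t in (0 : ℝ)..(1 - s), s ^ a * t ^ b
      = (1 / (b + 1)) * (s ^ a * (1 - s) ^ (b + 1)) := fun s => by
    rw [intervalIntegral.integral_const_mul, integral_pow, zero_pow b.succ_ne_zero]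
    ring
  rw [setIntegral_refTriangle_eq (by fun_prop)]
  simp only [hinner]
  rw [intervalIntegral.integral_const_mul, integral_pow_mul_one_sub_pow, Nat.factorial_succ b,
    show a + (b + 1) + 1 = a + b + 2 by ring]
  push_cast
  field_simp

/-- Dirichlet's formula, by induction on the exponent of the first coordinate, which is one minus
the sum of the other two. -/
theorem setIntegral_refTriangle_prod_pow (e : Fin 3 → ℕ) :
    ∫ s in refTriangle, ∏ i, refBary s i ^ e i
      = (∏ i, (e i).factorial : ℝ) / (∑ i, e i + 2).factorial := by
  suffices h : ∀ c a b : ℕ, ∫ s in refTriangle, (1 - s.1 - s.2) ^ c * s.1 ^ a * s.2 ^ b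
      = (c.factorial * a.factorial * b.factorial : ℝ) / (c + a + b + 2).factorial by
    simpa [Fin.prod_univ_three, Fin.sum_univ_three, refBary] using h (e 0) (e 1) (e 2)
  intro c
  induction c with
  | zero => simpa using setIntegral_refTriangle_pow_mul_pow
  | succ c ih =>
    intro a b
    have hsplit : ∀ s : ℝ × ℝ, (1 - s.1 - s.2) ^ (c + 1) * s.1 ^ a * s.2 ^ b
        = (1 - s.1 - s.2) ^ c * s.1 ^ a * s.2 ^ b - (1 - s.1 - s.2) ^ c * s.1 ^ (a + 1) * s.2 ^ b
          - (1 - s.1 - s.2) ^ c * s.1 ^ a * s.2 ^ (b + 1) := fun s => by ring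
    have hint : ∀ a b, IntegrableOn (fun s : ℝ × ℝ => (1 - s.1 - s.2) ^ c * s.1 ^ a * s.2 ^ b)
        refTriangle := fun a b => integrableOn_refTriangle (by fun_prop)
    simp only [hsplit]
    rw [integral_sub ?_ (hint a (b + 1)), integral_sub (hint a b) (hint (a + 1) b), ih, ih, ih,
      show c + (a + 1) + b + 2 = c + a + b + 2 + 1 by ring,
      show c + a + (b + 1) + 2 = c + a + b + 2 + 1 by ring,
      show c + 1 + a + b + 2 = c + a + b + 2 + 1 by ring,
      Nat.factorial_succ (c + a + b + 2), Nat.factorial_succ a, Nat.factorial_succ b,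
      Nat.factorial_succ c]
    · push_cast
      field_simp
      ring
    · exact (hint a b).sub (hint (a + 1) b)

theorem setIntegral_refBary_mul (m l : Fin 3) :
    ∫ s in refTriangle, refBary s m * refBary s l = (1 + if m = l then 1 else 0) / 24 := by
  have h := setIntegral_refTriangle_prod_pow
    fun i => (if m = i then 1 else 0) + (if l = i then 1 else 0)
  simp only [pow_add, Finset.prod_mul_distrib, Finset.prod_pow_boole, Finset.mem_univ,
    if_true] at h
  rw [h]
  fin_cases m <;> fin_cases l <;>
    norm_num [Fin.prod_univ_three, Fin.sum_univ_three, Nat.factorial, Fin.ext_iff]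

theorem setIntegral_refBary_mul_mul {m l : Fin 3} (hml : m ≠ l) (p : Fin 3) :
    ∫ s in refTriangle, refBary s m * refBary s l * refBary s p
      = (1 + (if m = p then 1 else 0) + if l = p then 1 else 0) / 120 := by
  have h := setIntegral_refTriangle_prod_pow
    fun i => (if m = i then 1 else 0) + (if l = i then 1 else 0) + (if p = i then 1 else 0)
  simp only [pow_add, Finset.prod_mul_distrib, Finset.prod_pow_boole, Finset.mem_univ,
    if_true] at h
  rw [h]
  fin_cases m <;> fin_cases l <;> first
    | exact absurd rfl hml
    | fin_cases p <;> norm_num [Fin.prod_univ_three, Fin.sum_univ_three, Nat.factorial, Fin.ext_iff]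

theorem setIntegral_refBubble_mul (m l : Fin 3) :
    ∫ s in refTriangle, (∏ i, refBary s i) * (refBary s m * refBary s l)
      = (2 + if m = l then 1 else 0) / 2520 := by
  have h := setIntegral_refTriangle_prod_pow
    fun i => 1 + ((if m = i then 1 else 0) + (if l = i then 1 else 0))
  simp only [pow_add, pow_one, Finset.prod_mul_distrib, Finset.prod_pow_boole, Finset.mem_univ,
    if_true] at h
  rw [h]
  fin_cases m <;> fin_cases l <;>
    norm_num [Fin.prod_univ_three, Fin.sum_univ_three, Nat.factorial, Fin.ext_iff]

/-! ### Geometry of a tetrahedron -/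

theorem mem_convexHull_image_affineBasis_iff {ι V : Type*} [Finite ι] [AddCommGroup V]
    [Module ℝ V] (b : AffineBasis ι ℝ V) {s : Set ι} {x : V} :
    x ∈ convexHull ℝ (b '' s) ↔ (∀ i, 0 ≤ b.coord i x) ∧ ∀ i ∉ s, b.coord i x = 0 := by
  cases nonempty_fintype ι
  constructor
  · intro hx
    refine ⟨?_, fun i hi => ?_⟩
    · have hmem := convexHull_mono (Set.image_subset_range b s) hx
      rwa [b.convexHull_eq_nonneg_coord] at hmem
    · refine convexHull_min ?_ ((convex_singleton 0).affine_preimage (b.coord i)) hx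
      rintro _ ⟨j, hj, rfl⟩
      exact b.coord_apply_ne (ne_of_mem_of_not_mem hj hi).symm
  · rintro ⟨hnonneg, hzero⟩
    have hsupp : ∀ i, i ∉ Finset.univ.filter (· ∈ s) → b.coord i x = 0 := fun i hi =>
      hzero i fun his => hi (Finset.mem_filter.2 ⟨Finset.mem_univ i, his⟩)
    rw [← b.linear_combination_coord_eq_self x, ← Finset.sum_subset (Finset.subset_univ _)
      fun i _ hi => by rw [hsupp i hi, zero_smul]]
    refine (convex_convexHull ℝ _).sum_mem (fun i _ => hnonneg i) ?_ fun i hi =>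
      subset_convexHull ℝ _ ⟨i, (Finset.mem_filter.1 hi).2, rfl⟩
    rw [Finset.sum_subset (Finset.subset_univ _) fun i _ hi => hsupp i hi,
      b.sum_coord_apply_eq_one]

theorem dot3_normalize3_self {v : Vec} (hv : v ≠ 0) : dot3 (normalize3 v) (normalize3 v) = 1 := by
  have hpos : 0 < dot3 v v := (dot3_self_nonneg v).lt_of_ne' (mt dot3_self_eq_zero.1 hv)
  rw [normalize3, enorm3, dot3_smul_left, dot3_smul_right, ← mul_assoc, ← mul_inv,
    Real.mul_self_sqrt hpos.le, inv_mul_cancel₀ hpos.ne']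

namespace Tetra

variable (T : Tetra)

/-- The vertices of a tetrahedron as an affine basis, which gives access to the library's
barycentric coordinates. -/
def affineBasis : AffineBasis (Fin 4) ℝ Vec :=
  ⟨T.vtx, T.indep, T.indep.affineSpan_eq_top_iff_card_eq_finrank_add_one.2 (by simp)⟩

/-- The barycentric coordinate belonging to vertex `i`. -/
def bary (i : Fin 4) : Vec →ᵃ[ℝ] ℝ := T.affineBasis.coord i

/-- The (constant) gradient of the barycentric coordinate belonging to vertex `i`. -/
def gradBary (i : Fin 4) : Vec := fun c => (T.bary i).linear (Pi.single c 1)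

/-- The quartic bubble function. -/
def bubble (x : Vec) : ℝ := ∏ i, T.bary i x

/-- The cubic bubble function of the face opposite to vertex `a`. -/
def faceBubble (a : Fin 4) (x : Vec) : ℝ := ∏ m, T.bary (a.succAbove m) x

/-- The vertices of the face opposite to vertex `a`, in the order used by `outNormal`. -/
def faceVtx (a : Fin 4) (m : Fin 3) : Vec := T.vtx (a.succAbove m)

/-- The affine parametrization of the face opposite to vertex `a` by the reference triangle. -/
def facePt (a : Fin 4) (s : ℝ × ℝ) : Vec := ∑ m, refBary s m • T.faceVtx a m

theorem bary_vtx (i j : Fin 4) : T.bary i (T.vtx j) = if i = j then 1 else 0 := by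
  convert T.affineBasis.coord_apply i j <;> rfl

theorem sum_bary (x : Vec) : ∑ i, T.bary i x = 1 := T.affineBasis.sum_coord_apply_eq_one x

theorem sum_bary_smul_vtx (x : Vec) : ∑ i, T.bary i x • T.vtx i = x :=
  T.affineBasis.linear_combination_coord_eq_self x

theorem polyDeg_bary (i : Fin 4) : PolyDeg 1 (T.bary i) := PolyDeg.one_iff.2 ⟨T.bary i, rfl⟩

theorem dot3_gradBary (i : Fin 4) (z : Vec) : dot3 (T.gradBary i) z = (T.bary i).linear z := by
  conv_rhs => rw [← Finset.univ_sum_single z, map_sum]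
  refine Finset.sum_congr rfl fun c _ => ?_
  rw [gradBary, mul_comm, ← smul_eq_mul, ← map_smul, ← Pi.single_smul, smul_eq_mul, mul_one]

theorem bary_sub_bary (i : Fin 4) (x y : Vec) :
    T.bary i x - T.bary i y = dot3 (T.gradBary i) (x - y) := by
  rw [dot3_gradBary]
  exact ((T.bary i).linearMap_vsub x y).symm

theorem pd_bary (i : Fin 4) (c : Fin 3) (x : Vec) : pd c (T.bary i) x = T.gradBary i c :=
  pd_affineMap (T.bary i) c

variable {T}

theorem IsBary.eq_bary {lam : Fin 4 → Vec → ℝ} (h : T.IsBary lam) (i : Fin 4) :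
    lam i = T.bary i :=
  (h.1 i).eq_of_eq_on_basis T.affineBasis (T.polyDeg_bary i) fun j =>
    (h.2 i j).trans (T.bary_vtx i j).symm

theorem IsBubble.eq_bubble {b : Vec → ℝ} (h : T.IsBubble b) : b = T.bubble := by
  obtain ⟨lam, hlam, hb⟩ := h
  funext x
  rw [hb, bubble]
  exact Finset.prod_congr rfl fun i _ => by rw [hlam.eq_bary]

variable (T)

theorem polyDeg_bubble : PolyDeg 4 T.bubble :=
  PolyDeg.prod (s := Finset.univ) fun i _ => T.polyDeg_bary i

theorem bubble_eq (a : Fin 4) (x : Vec) : T.bubble x = T.bary a x * T.faceBubble a x :=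
  Fin.prod_univ_succAbove _ a

theorem mem_K_iff {x : Vec} : x ∈ T.K ↔ ∀ i, 0 ≤ T.bary i x := by
  rw [K, show Set.range T.vtx = Set.range T.affineBasis from rfl,
    T.affineBasis.convexHull_eq_nonneg_coord]
  rfl

theorem mem_convexHull_vtx_image_iff {s : Set (Fin 4)} {x : Vec} :
    x ∈ convexHull ℝ (T.vtx '' s) ↔ (∀ i, 0 ≤ T.bary i x) ∧ ∀ i ∉ s, T.bary i x = 0 :=
  mem_convexHull_image_affineBasis_iff T.affineBasis

theorem mem_face_iff {a : Fin 4} {x : Vec} :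
    x ∈ T.face a ↔ (∀ i, 0 ≤ T.bary i x) ∧ T.bary a x = 0 := by
  simp [face, mem_convexHull_vtx_image_iff]

theorem bary_eq_zero_of_mem_face {a : Fin 4} {x : Vec} (hx : x ∈ T.face a) : T.bary a x = 0 :=
  (T.mem_face_iff.1 hx).2

theorem face_subset_K (a : Fin 4) : T.face a ⊆ T.K :=
  convexHull_mono (Set.image_subset_range _ _)

theorem isCompact_K : IsCompact T.K := (Set.finite_range _).isCompact_convexHull ℝ

theorem isCompact_face (a : Fin 4) : IsCompact (T.face a) :=
  (Set.toFinite _).isCompact_convexHull ℝ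

theorem bary_faceVtx (a : Fin 4) (m : Fin 3) : T.bary a (T.faceVtx a m) = 0 := by
  rw [faceVtx, bary_vtx, if_neg (Fin.ne_succAbove a m)]

theorem bary_succAbove_facePt (a : Fin 4) (m : Fin 3) (s : ℝ × ℝ) :
    T.bary (a.succAbove m) (T.facePt a s) = refBary s m := by
  rw [facePt, (T.polyDeg_bary _).affine_interpolation _ (sum_refBary s)]
  simp [faceVtx, bary_vtx]

theorem bary_facePt (a : Fin 4) (s : ℝ × ℝ) : T.bary a (T.facePt a s) = 0 := by
  rw [facePt, (T.polyDeg_bary _).affine_interpolation _ (sum_refBary s)]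
  simp [bary_faceVtx]

theorem faceBubble_facePt (a : Fin 4) (s : ℝ × ℝ) :
    T.faceBubble a (T.facePt a s) = ∏ m, refBary s m :=
  Finset.prod_congr rfl fun m _ => T.bary_succAbove_facePt a m s

theorem image_facePt (a : Fin 4) : T.facePt a '' refTriangle = T.face a := by
  ext x
  constructor
  · rintro ⟨s, hs, rfl⟩
    refine T.mem_face_iff.2 ⟨fun i => ?_, T.bary_facePt a s⟩
    obtain rfl | ⟨m, rfl⟩ := Fin.eq_self_or_eq_succAbove a i
    · exact (T.bary_facePt i s).ge
    · rw [bary_succAbove_facePt]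
      exact mem_refTriangle_iff.1 hs m
  · intro hx
    obtain ⟨hnonneg, hzero⟩ := T.mem_face_iff.1 hx
    have hsum := T.sum_bary x
    rw [Fin.sum_univ_succAbove _ a, hzero, zero_add, Fin.sum_univ_three] at hsum
    have hcoord : ∀ m, refBary (T.bary (a.succAbove 1) x, T.bary (a.succAbove 2) x) m
        = T.bary (a.succAbove m) x := by
      rw [Fin.forall_fin_succ]
      refine ⟨?_, fun m => by fin_cases m <;> rfl⟩
      simp only [refBary, Matrix.cons_val_zero]
      linarith
    refine ⟨(T.bary (a.succAbove 1) x, T.bary (a.succAbove 2) x),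
      mem_refTriangle_iff.2 fun m => (hcoord m).symm ▸ hnonneg _, ?_⟩
    conv_rhs => rw [← T.sum_bary_smul_vtx x, Fin.sum_univ_succAbove _ a, hzero, zero_smul, zero_add]
    simp only [facePt, hcoord, faceVtx]

theorem facePt_mem_face (a : Fin 4) {s : ℝ × ℝ} (hs : s ∈ refTriangle) :
    T.facePt a s ∈ T.face a :=
  T.image_facePt a ▸ Set.mem_image_of_mem _ hs

theorem continuous_facePt (a : Fin 4) : Continuous (T.facePt a) :=
  continuous_finsetSum _ fun m _ => (continuous_refBary m).smul continuous_const

theorem exists_setIntegral_face_eq (a : Fin 4) : ∃ c : ℝ, c ≠ 0 ∧ ∀ g : Vec → ℝ,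
    ∫ x in T.face a, g x ∂μH[2] = c * ∫ s in refTriangle, g (T.facePt a s) := by
  let L : ℝ × ℝ →ₗ[ℝ] Vec :=
    (LinearMap.fst ℝ ℝ ℝ).smulRight (T.faceVtx a 1 - T.faceVtx a 0)
      + (LinearMap.snd ℝ ℝ ℝ).smulRight (T.faceVtx a 2 - T.faceVtx a 0)
  have hparam : T.facePt a = fun s => T.faceVtx a 0 + L s := by
    funext s
    simp only [facePt, refBary, Fin.sum_univ_three, Matrix.cons_val, L, LinearMap.add_apply,
      LinearMap.smulRight_apply, LinearMap.fst_apply, LinearMap.snd_apply]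
    module
  have hL : Function.Injective L := fun s t hst => by
    have hpt : T.facePt a s = T.facePt a t := by simp only [hparam, hst]
    have hcoord : ∀ m, refBary s m = refBary t m := fun m => by
      rw [← T.bary_succAbove_facePt a m s, hpt, bary_succAbove_facePt]
    exact Prod.ext (hcoord 1) (hcoord 2)
  obtain ⟨c, hc, hint⟩ := exists_setIntegral_image_affine_eq (d := 2) volume (by simp) hL
    (T.faceVtx a 0)
  refine ⟨c, hc, fun g => ?_⟩
  rw [← T.image_facePt a, hparam]
  exact hint _ g

theorem exists_setIntegral_edge_eq {a b : Fin 4} (hab : a ≠ b) : ∃ c : ℝ, c ≠ 0 ∧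
    ∀ g : Vec → ℝ, ∫ x in T.edge a b, g x ∂μH[1]
      = c * ∫ t in Set.Icc (0 : ℝ) 1, g (T.vtx a + t • (T.vtx b - T.vtx a)) := by
  have hne : T.vtx b - T.vtx a ≠ 0 := sub_ne_zero.2 fun h => hab (T.indep.injective h).symm
  have hL : Function.Injective (LinearMap.toSpanSingleton ℝ Vec (T.vtx b - T.vtx a)) :=
    smul_left_injective ℝ hne
  obtain ⟨c, hc, hint⟩ := exists_setIntegral_image_affine_eq (d := 1) volume (by simp) hL
    (T.vtx a)
  refine ⟨c, hc, fun g => ?_⟩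
  rw [edge, segment_eq_image']
  exact hint _ g

theorem eq_sum_gradBary_smul (v x₀ : Vec) :
    v = ∑ i, dot3 (T.gradBary i) v • (T.vtx i - x₀) := by
  have hdot : ∀ i, dot3 (T.gradBary i) v = T.bary i (x₀ + v) - T.bary i x₀ := fun i => by
    rw [bary_sub_bary, add_sub_cancel_left]
  simp only [hdot, smul_sub, sub_smul, Finset.sum_sub_distrib, sum_bary_smul_vtx,
    ← Finset.sum_smul, sum_bary]
  simp

theorem dot3_gradBary_faceVtx_sub (a : Fin 4) (m l p : Fin 3) :
    dot3 (T.gradBary (a.succAbove m)) (T.faceVtx a l - T.faceVtx a p)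
      = (if m = l then 1 else 0) - if m = p then 1 else 0 := by
  simp only [← bary_sub_bary, faceVtx, bary_vtx, Fin.succAbove_right_inj]

theorem cross3_faceVtx_sub_ne_zero (a : Fin 4) :
    cross3 (T.faceVtx a 1 - T.faceVtx a 0) (T.faceVtx a 2 - T.faceVtx a 0) ≠ 0 := by
  rw [cross3_eq_crossProduct, crossProduct_ne_zero_iff_linearIndependent,
    LinearIndependent.pair_iff]
  intro c d hcd
  have hdot : ∀ m, dot3 (T.gradBary (a.succAbove m)) (c • (T.faceVtx a 1 - T.faceVtx a 0)
      + d • (T.faceVtx a 2 - T.faceVtx a 0)) = 0 := fun m => by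
    rw [hcd, dot3_comm, dot3_zero_left]
  simp only [dot3_add_right, dot3_smul_right, dot3_gradBary_faceVtx_sub] at hdot
  exact ⟨by simpa using hdot 1, by simpa using hdot 2⟩

theorem dot3_faceVtx_sub_outNormal (a : Fin 4) (m : Fin 3) :
    dot3 (T.faceVtx a m - T.faceVtx a 0) (T.outNormal a) = 0 := by
  rw [dot3_comm]
  simp only [outNormal, normalize3, dot3_smul_left]
  fin_cases m
  · simp [dot3, faceVtx]
  · exact mul_eq_zero_of_right _ (mul_eq_zero_of_right _ (dot3_cross3_self _ _))
  · exact mul_eq_zero_of_right _ (mul_eq_zero_of_right _ (dot3_cross3_self_right _ _))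

theorem dot3_outNormal_self (a : Fin 4) : dot3 (T.outNormal a) (T.outNormal a) = 1 := by
  have hnorm := dot3_normalize3_self (T.cross3_faceVtx_sub_ne_zero a)
  simp only [outNormal]
  split_ifs <;> simpa only [dot3_smul_left, dot3_smul_right, neg_one_mul, neg_neg, one_mul]

theorem exists_outNormal_eq_smul_gradBary (a : Fin 4) :
    ∃ κ : ℝ, κ ≠ 0 ∧ T.outNormal a = κ • T.gradBary a := by
  have hdot : ∀ v, dot3 v (T.outNormal a)
      = dot3 (T.vtx a - T.faceVtx a 0) (T.outNormal a) * dot3 (T.gradBary a) v := fun v => by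
    conv_lhs => rw [T.eq_sum_gradBary_smul v (T.faceVtx a 0)]
    have hface : ∀ m, dot3 (T.vtx (a.succAbove m) - T.faceVtx a 0) (T.outNormal a) = 0 :=
      T.dot3_faceVtx_sub_outNormal a
    simp only [dot3_sum_left, dot3_smul_left]
    rw [Fin.sum_univ_succAbove _ a]
    simp only [hface, mul_zero, Finset.sum_const_zero, add_zero]
    exact mul_comm _ _
  have hsmul : T.outNormal a
      = dot3 (T.vtx a - T.faceVtx a 0) (T.outNormal a) • T.gradBary a := by
    refine sub_eq_zero.1 (dot3_self_eq_zero.1 ?_)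
    rw [dot3_sub_right, dot3_smul_right, hdot, dot3_comm (T.gradBary a), sub_self]
  refine ⟨_, fun h0 => ?_, hsmul⟩
  have hself := T.dot3_outNormal_self a
  rw [hsmul, h0, zero_smul, dot3_zero_left] at hself
  exact zero_ne_one hself

end Tetra

/-! ### Unisolvence of the Tai–Winther degrees of freedom -/

theorem curl3_smul {f : Vec → ℝ} {u : Vec → Vec} {x : Vec} (hf : DifferentiableAt ℝ f x)
    (hu : DifferentiableAt ℝ u x) :
    curl3 (fun y => f y • u y) x = f x • curl3 u x + cross3 (grad3 f x) (u x) := by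
  have hui : ∀ i, DifferentiableAt ℝ (fun y => u y i) x := differentiableAt_pi.1 hu
  ext i
  fin_cases i <;>
    simp only [curl3, cross3, grad3, Pi.smul_apply, Pi.add_apply, smul_eq_mul, pd_mul hf (hui _),
      Fin.zero_eta, Fin.mk_one, Fin.reduceFinMk, Matrix.cons_val] <;>
    ring

theorem VPolyDeg.affine_interpolation {ι : Type*} [Fintype ι] {r : Vec → Vec}
    (hr : VPolyDeg 1 r) (v : ι → Vec) {l : ι → ℝ} (hl : ∑ a, l a = 1) :
    r (∑ a, l a • v a) = ∑ a, l a • r (v a) := by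
  ext i
  simpa using (hr i).affine_interpolation v hl

/-- For fixed `a` the equations say that `∑ m ≠ a, R m j` does not depend on `j ≠ a`, which gives
`R a j = A a + C j` off the diagonal; the weight `3` on the diagonal then makes `C` constant. -/
theorem eq_of_sum_weighted_sub_eq_zero {R : Fin 4 → Fin 4 → ℝ}
    (h : ∀ (a : Fin 4) (j : Fin 3), ∑ m, ∑ l, (2 + if m = l then 1 else 0)
      * (R (a.succAbove m) (a.succAbove l) - R (a.succAbove m) (a.succAbove j)) = 0)
    (m l : Fin 4) : R m l = R m 0 := by
  simp [Fin.forall_fin_succ, Fin.sum_univ_three, Fin.succAbove] at h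
  fin_cases m <;> fin_cases l <;>
    dsimp only [Fin.mk_zero, Fin.mk_one, Fin.reduceFinMk, Fin.zero_eta] <;> linarith

namespace Tetra

variable (T : Tetra)

theorem eq_zero_of_dot3_vtx_sub_eq_zero {v x₀ : Vec} (h : ∀ i, dot3 v (T.vtx i - x₀) = 0) :
    v = 0 := by
  refine dot3_self_eq_zero.1 ?_
  nth_rw 2 [T.eq_sum_gradBary_smul v x₀]
  simp only [dot3_sum_right, dot3_smul_right, h, mul_zero, Finset.sum_const_zero]

theorem eq_zero_of_vtx_eq_zero {r : Vec → Vec} (hr : VPolyDeg 1 r) (h : ∀ i, r (T.vtx i) = 0) :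
    r = 0 := by
  funext x
  rw [← T.sum_bary_smul_vtx x, hr.affine_interpolation _ (T.sum_bary x)]
  simp only [h, smul_zero, Finset.sum_const_zero, Pi.zero_apply]

theorem dot3_gradBary_sub_of_mem_face {a : Fin 4} {x y : Vec} (hx : x ∈ T.face a)
    (hy : y ∈ T.face a) : dot3 (T.gradBary a) (x - y) = 0 := by
  rw [← bary_sub_bary, T.bary_eq_zero_of_mem_face hx, T.bary_eq_zero_of_mem_face hy, sub_self]

theorem dot3_sub_outNormal_of_mem_face {a : Fin 4} {x y : Vec} (hx : x ∈ T.face a)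
    (hy : y ∈ T.face a) : dot3 (x - y) (T.outNormal a) = 0 := by
  obtain ⟨κ, -, hκ⟩ := T.exists_outNormal_eq_smul_gradBary a
  rw [hκ, dot3_smul_right, dot3_comm, T.dot3_gradBary_sub_of_mem_face hx hy, mul_zero]

theorem dot3_gradBary_outNormal_ne_zero (a : Fin 4) :
    dot3 (T.gradBary a) (T.outNormal a) ≠ 0 := by
  obtain ⟨κ, -, hκ⟩ := T.exists_outNormal_eq_smul_gradBary a
  intro h
  have hself := T.dot3_outNormal_self a
  nth_rw 1 [hκ] at hself
  rw [dot3_smul_left, h, mul_zero] at hself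
  exact zero_ne_one hself

theorem faceVtx_mem_face (a : Fin 4) (m : Fin 3) : T.faceVtx a m ∈ T.face a :=
  subset_convexHull ℝ _ ⟨_, Fin.succAbove_ne a m, rfl⟩

theorem facePt_sub (a : Fin 4) (s : ℝ × ℝ) (y : Vec) :
    T.facePt a s - y = ∑ m, refBary s m • (T.faceVtx a m - y) := by
  simp only [smul_sub, Finset.sum_sub_distrib, ← Finset.sum_smul, sum_refBary, one_smul, facePt]

theorem faceTanMoment_eq_zero_iff (a : Fin 4) (v q : Vec → Vec) :
    faceTanMoment T a v q = 0 ↔ ∫ s in refTriangle,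
      dot3 (cross3 (v (T.facePt a s)) (T.outNormal a)) (q (T.facePt a s)) = 0 := by
  obtain ⟨c, hc, hint⟩ := T.exists_setIntegral_face_eq a
  rw [faceTanMoment, hint, mul_eq_zero, or_iff_right hc]

theorem faceNorMoment_eq_zero_iff (a : Fin 4) (v : Vec → Vec) (q : Vec → ℝ) :
    faceNorMoment T a v q = 0 ↔ ∫ s in refTriangle,
      dot3 (v (T.facePt a s)) (T.outNormal a) * q (T.facePt a s) = 0 := by
  obtain ⟨c, hc, hint⟩ := T.exists_setIntegral_face_eq a
  rw [faceNorMoment, hint, mul_eq_zero, or_iff_right hc]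

theorem exists_memRT_eq_sub (a : Fin 4) (j : Fin 3) :
    ∃ q, MemRT (T.outNormal a) q ∧ ∀ x ∈ T.face a, q x = x - T.faceVtx a j := by
  set n := T.outNormal a with hn
  set w := T.faceVtx a j
  refine ⟨fun x => -(w - dot3 w n • n) + (1 : ℝ) • (x - dot3 x n • n), ⟨_, 1, ?_, fun _ => rfl⟩,
    fun x hx => ?_⟩
  · rw [← neg_one_smul ℝ, dot3_smul_left, dot3_sub_left, dot3_smul_left, hn,
      T.dot3_outNormal_self]
    ring
  · have hxw := T.dot3_sub_outNormal_of_mem_face hx (T.faceVtx_mem_face a j)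
    rw [dot3_sub_left, sub_eq_zero] at hxw
    simp only [n, w, hxw]
    module

theorem curl3_bubble_smul {a : Fin 4} {x : Vec} (hx : T.bary a x = 0) {r : Vec → Vec}
    (hr : DifferentiableAt ℝ r x) :
    curl3 (fun y => T.bubble y • r y) x = T.faceBubble a x • cross3 (T.gradBary a) (r x) := by
  have hfactor : (fun y => T.bubble y • r y) = fun y => T.bary a y • T.faceBubble a y • r y := by
    funext y
    rw [T.bubble_eq a, mul_smul]
  have hfb : Differentiable ℝ (T.faceBubble a) :=
    (PolyDeg.prod (s := Finset.univ) fun m _ => T.polyDeg_bary (a.succAbove m)).differentiable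
  have hgrad : grad3 (T.bary a) x = T.gradBary a := funext fun c => T.pd_bary a c x
  rw [hfactor, curl3_smul (u := fun y => T.faceBubble a y • r y)
    (T.polyDeg_bary a).differentiable.differentiableAt (hfb.differentiableAt.smul hr),
    hx, zero_smul, zero_add, hgrad]
  ext i
  fin_cases i <;> simp [cross3] <;> ring

theorem setIntegral_bubble_mul_dot3_eq_zero {r : Vec → Vec} (hr : VPolyDeg 1 r) {a : Fin 4}
    (h : ∀ q, MemRT (T.outNormal a) q →
      faceTanMoment T a (curl3 fun y => T.bubble y • r y) q = 0) (j : Fin 3) :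
    ∫ s in refTriangle, (∏ m, refBary s m)
      * dot3 (r (T.facePt a s)) (T.facePt a s - T.faceVtx a j) = 0 := by
  obtain ⟨q, hq, hqx⟩ := T.exists_memRT_eq_sub a j
  have hmoment := (T.faceTanMoment_eq_zero_iff a _ q).1 (h q hq)
  have hintegrand : ∀ s ∈ refTriangle,
      dot3 (cross3 (curl3 (fun y => T.bubble y • r y) (T.facePt a s)) (T.outNormal a))
        (q (T.facePt a s))
      = dot3 (T.gradBary a) (T.outNormal a) * ((∏ m, refBary s m)
        * dot3 (r (T.facePt a s)) (T.facePt a s - T.faceVtx a j)) := fun s hs => by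
    have hmem := T.facePt_mem_face a hs
    rw [hqx _ hmem, T.curl3_bubble_smul (T.bary_facePt a s) hr.differentiable.differentiableAt,
      cross3_smul_left, dot3_smul_left, dot3_cross3_cross3_left,
      T.dot3_gradBary_sub_of_mem_face hmem (T.faceVtx_mem_face a j), faceBubble_facePt]
    ring
  rw [setIntegral_congr_fun isClosed_refTriangle.measurableSet hintegrand, integral_const_mul]
    at hmoment
  exact (mul_eq_zero.1 hmoment).resolve_left (T.dot3_gradBary_outNormal_ne_zero a)

theorem sum_dot3_faceVtx_sub_eq_zero {r : Vec → Vec} (hr : VPolyDeg 1 r) {a : Fin 4}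
    (h : ∀ q, MemRT (T.outNormal a) q →
      faceTanMoment T a (curl3 fun y => T.bubble y • r y) q = 0) (j : Fin 3) :
    ∑ m, ∑ l, (2 + if m = l then 1 else 0)
      * dot3 (r (T.faceVtx a m)) (T.faceVtx a l - T.faceVtx a j) = 0 := by
  have hint := T.setIntegral_bubble_mul_dot3_eq_zero hr h j
  have hexpand : ∀ s, (∏ i, refBary s i)
      * dot3 (r (T.facePt a s)) (T.facePt a s - T.faceVtx a j)
      = ∑ m, ∑ l, (∏ i, refBary s i) * (refBary s m * refBary s l)
        * dot3 (r (T.faceVtx a m)) (T.faceVtx a l - T.faceVtx a j) := fun s => by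
    rw [facePt_sub, facePt, hr.affine_interpolation _ (sum_refBary s)]
    simp only [dot3_sum_left, dot3_sum_right, dot3_smul_left, dot3_smul_right, Finset.mul_sum]
    rw [Finset.sum_comm]
    exact Finset.sum_congr rfl fun m _ => Finset.sum_congr rfl fun l _ => by ring
  have hcont : ∀ m l, IntegrableOn (fun s => (∏ i, refBary s i) * (refBary s m * refBary s l)
      * dot3 (r (T.faceVtx a m)) (T.faceVtx a l - T.faceVtx a j)) refTriangle := fun m l =>
    integrableOn_refTriangle (((continuous_finsetProd _ fun i _ => continuous_refBary i).mul
      ((continuous_refBary m).mul (continuous_refBary l))).mul continuous_const)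
  simp only [hexpand] at hint
  rw [integral_finsetSum _ fun m _ => integrable_finsetSum _ fun l _ => hcont m l] at hint
  simp only [integral_finsetSum _ fun l _ => hcont _ l, integral_mul_const,
    setIntegral_refBubble_mul, div_mul_eq_mul_div, ← Finset.sum_div] at hint
  exact (div_eq_zero_iff.1 hint).resolve_right (by norm_num)

theorem eq_zero_of_faceTanMoment_curl3_bubble_smul {r : Vec → Vec} (hr : VPolyDeg 1 r)
    (h : ∀ a q, MemRT (T.outNormal a) q →
      faceTanMoment T a (curl3 fun y => T.bubble y • r y) q = 0) : r = 0 := by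
  have hrow := eq_of_sum_weighted_sub_eq_zero (R := fun m l => dot3 (r (T.vtx m)) (T.vtx l))
    fun a j => by
      simpa only [dot3_sub_right, faceVtx] using T.sum_dot3_faceVtx_sub_eq_zero hr (h a) j
  refine T.eq_zero_of_vtx_eq_zero hr fun m =>
    T.eq_zero_of_dot3_vtx_sub_eq_zero (x₀ := T.vtx 0) fun l => ?_
  rw [dot3_sub_right, sub_eq_zero]
  exact hrow m l

theorem dot3_outNormal_eq_zero_of_faceNorMoment {p : Vec → Vec} (hp : VPolyDeg 1 p) {a : Fin 4}
    (h : ∀ q, PolyDeg 1 q → faceNorMoment T a p q = 0) {x : Vec} (hx : x ∈ T.face a) :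
    dot3 (p x) (T.outNormal a) = 0 := by
  have hpn : PolyDeg 1 fun x => dot3 (p x) (T.outNormal a) := hp.dot3 (.const 0 _)
  rw [← T.image_facePt a] at hx
  obtain ⟨s, hs, rfl⟩ := hx
  exact eqOn_zero_of_setIntegral_mul_self_eq_zero isCompact_refTriangle
    refTriangle_subset_closure_interior (hpn.continuous.comp (T.continuous_facePt a)).continuousOn
    ((T.faceNorMoment_eq_zero_iff a p _).1 (h _ hpn)) hs

theorem eq_zero_of_faceNorMoment {p : Vec → Vec} (hp : VPolyDeg 1 p)
    (h : ∀ a q, PolyDeg 1 q → faceNorMoment T a p q = 0) : p = 0 := by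
  refine T.eq_zero_of_vtx_eq_zero hp fun j => ?_
  have hgrad : ∀ a, dot3 (T.gradBary a) (p (T.vtx j)) • (T.vtx a - T.vtx j) = 0 := fun a => by
    obtain rfl | ⟨m, rfl⟩ := Fin.eq_self_or_eq_succAbove a j
    · rw [sub_self, smul_zero]
    · obtain ⟨κ, hκ₀, hκ⟩ := T.exists_outNormal_eq_smul_gradBary a
      have hnormal := T.dot3_outNormal_eq_zero_of_faceNorMoment hp (h a) (T.faceVtx_mem_face a m)
      rw [hκ, dot3_smul_right, mul_eq_zero, or_iff_right hκ₀, dot3_comm] at hnormal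
      rw [show T.vtx (a.succAbove m) = T.faceVtx a m from rfl, hnormal, zero_smul]
  rw [T.eq_sum_gradBary_smul (p (T.vtx j)) (T.vtx j), Finset.sum_eq_zero fun a _ => hgrad a]

end Tetra

/-! ### Unisolvence of the Nédélec degrees of freedom -/

theorem MemND.vpolyDeg {k : ℕ} (hk : k ≤ 2) {d : Vec → Vec} (hd : MemND k d) : VPolyDeg 2 d := by
  obtain ⟨q, p, hq, hp, hqp⟩ := hd
  rw [funext hqp]
  exact (hq.grad3.mono hk).add (VPolyDeg.coord.cross3 hp)

/-- The quadratic part `x × p x` of `d` is orthogonal to `x`, and so drops out. -/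
theorem MemND.exists_polyDeg_eq_dot3_line {k : ℕ} (hk : 1 ≤ k) {d : Vec → Vec} (hd : MemND k d)
    (x₀ z : Vec) :
    ∃ q, PolyDeg k q ∧ ∀ t : ℝ, q (x₀ + t • z) = dot3 (d (x₀ + t • z)) z := by
  obtain ⟨q, p, hq, hp, hqp⟩ := hd
  have hcross : VPolyDeg k fun x => cross3 x₀ (p x) :=
    (((VPolyDeg.const 0 x₀).cross3 hp).mono (by omega))
  refine ⟨fun x => dot3 (grad3 q x + cross3 x₀ (p x)) z,
    (hq.grad3.add hcross).dot3 (.const 0 z), fun t => ?_⟩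
  have hline : dot3 (cross3 (t • z) (p (x₀ + t • z))) z = 0 := by
    rw [cross3_smul_left, dot3_smul_left, dot3_cross3_self, mul_zero]
  have hsplit : cross3 (x₀ + t • z) (p (x₀ + t • z))
      = cross3 x₀ (p (x₀ + t • z)) + cross3 (t • z) (p (x₀ + t • z)) := by
    simp only [cross3_eq_crossProduct, map_add, LinearMap.add_apply]
  simp only [hqp, hsplit, dot3_add_left, hline, add_zero]

/-- For `k = 1` the quadratic part `x × p x` of `d` is orthogonal to `x`, which keeps the degree
at two. -/
theorem MemND.polyDeg_dot3_sub {d : Vec → Vec} (hd : MemND 1 d) (x₀ : Vec) :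
    PolyDeg 2 fun x => dot3 (d x) (x - x₀) := by
  obtain ⟨q, p, hq, hp, hqp⟩ := hd
  have heq : (fun x => dot3 (d x) (x - x₀))
      = fun x => dot3 (grad3 q x) (x - x₀) - dot3 (cross3 x (p x)) x₀ := by
    funext x
    rw [hqp, dot3_add_left, dot3_sub_right (cross3 x (p x)), dot3_cross3_self]
    ring
  rw [heq]
  exact (hq.grad3.dot3 (VPolyDeg.coord.sub (.const 1 x₀))).sub
    ((VPolyDeg.coord.cross3 hp).dot3 (.const 0 x₀))

theorem VPolyDeg.quadratic_interpolation {ι : Type*} [Fintype ι] {d : Vec → Vec}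
    (hd : VPolyDeg 2 d) {v : ι → Vec} (hv : ∀ a, d (v a) = 0) {l : ι → ℝ} (hl : ∑ a, l a = 1) :
    d (∑ a, l a • v a) = ∑ a, ∑ b, (2 * (l a * l b)) • d (midpoint ℝ (v a) (v b)) := by
  ext i
  simpa [hv, Finset.mul_sum, mul_assoc] using (hd i).quadratic_interpolation v hl

theorem setIntegral_refTriangle_sum_mul {ι : Type*} [Fintype ι] {φ : ι → ℝ × ℝ → ℝ}
    (hφ : ∀ i, Continuous (φ i)) (c : ι → ℝ) :
    ∫ s in refTriangle, ∑ i, φ i s * c i = ∑ i, (∫ s in refTriangle, φ i s) * c i := by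
  have hint : ∀ i, IntegrableOn (fun s => φ i s * c i) refTriangle := fun i =>
    integrableOn_refTriangle ((hφ i).mul continuous_const)
  rw [integral_finsetSum _ fun i _ => hint i]
  simp only [integral_mul_const]

theorem eq_zero_of_midpoint_tangential_relations {S : Fin 3 → Fin 3 → Fin 3 → ℝ}
    (hsymm : ∀ m l, S m l = S l m) (hdiag : ∀ m, S m m = 0) (hzero : ∀ m l, S m l 0 = 0)
    (hedge : ∀ m l, S m l m = S m l l) (hconst : ∀ j, ∑ m, ∑ l, S m l j = 0)
    (hlin : ∑ m, ∑ l, S m l m = 0) (m l j : Fin 3) : S m l j = 0 := by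
  have h₁ := hconst 1
  have h₂ := hconst 2
  have e₀₁ := hedge 0 1
  have e₀₂ := hedge 0 2
  have e₁₂ := hedge 1 2
  simp only [Fin.sum_univ_three, hdiag, hsymm 1 0, hsymm 2 0, hsymm 2 1, hzero,
    Pi.zero_apply] at h₁ h₂ e₀₁ e₀₂ hlin
  revert m l j
  simp only [Fin.forall_fin_succ, Fin.succ_zero_eq_one, Fin.succ_one_eq_two, IsEmpty.forall_iff,
    and_true, true_and, hdiag, hsymm 1 0, hsymm 2 0, hsymm 2 1, hzero, Pi.zero_apply]
  and_intros <;> linarith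

namespace Tetra

variable (T : Tetra)

theorem dot3_edge_eq_zero_of_edgeMoment {k : ℕ} (hk : 1 ≤ k) {d : Vec → Vec} (hd : MemND k d)
    (hdc : Continuous d) {a b : Fin 4} (hab : a ≠ b)
    (h : ∀ q, PolyDeg k q → edgeMoment T a b d q = 0) {t : ℝ} (ht : t ∈ Set.Icc (0 : ℝ) 1) :
    dot3 (d (T.vtx a + t • (T.vtx b - T.vtx a))) (T.vtx b - T.vtx a) = 0 := by
  set z := T.vtx b - T.vtx a with hz
  obtain ⟨q, hq, hqt⟩ := hd.exists_polyDeg_eq_dot3_line hk (T.vtx a) z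
  obtain ⟨c, hc, hint⟩ := T.exists_setIntegral_edge_eq hab
  have hlen : (enorm3 z)⁻¹ ≠ 0 := fun h₀ => by
    have hself := dot3_normalize3_self
      (sub_ne_zero.2 fun hba => hab (T.indep.injective hba).symm : z ≠ 0)
    rw [normalize3, h₀, zero_smul, dot3_zero_left] at hself
    exact zero_ne_one hself
  have hmoment := h q hq
  simp only [edgeMoment, hint, tangent, normalize3, ← hz, hqt, dot3_smul_right, mul_assoc,
    integral_const_mul, mul_eq_zero, hc, hlen, false_or] at hmoment
  refine eqOn_zero_of_setIntegral_mul_self_eq_zero isCompact_Icc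
    (by rw [interior_Icc, closure_Ioo zero_ne_one]) ?_ hmoment ht
  simp only [dot3_eq_dotProduct]
  fun_prop

theorem setIntegral_dot3_eq_zero_of_faceTanMoment {a : Fin 4} {v w : Vec → Vec}
    (hw : ∀ x ∈ T.face a, dot3 (T.outNormal a) (w x) = 0)
    (h : faceTanMoment T a v (fun x => cross3 (T.outNormal a) (w x)) = 0) :
    ∫ s in refTriangle, dot3 (v (T.facePt a s)) (w (T.facePt a s)) = 0 := by
  rw [faceTanMoment_eq_zero_iff, ← neg_eq_zero, ← integral_neg] at h
  rw [← h]
  refine setIntegral_congr_fun isClosed_refTriangle.measurableSet fun s hs => ?_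
  rw [dot3_cross3_cross3, hw _ (T.facePt_mem_face a hs), T.dot3_outNormal_self]
  ring

/-- The component along the `p`-th edge from the base vertex of the face `a` of the value of `d` at
the midpoint of the vertices `m` and `l` of that face. -/
def midpointTangential (a : Fin 4) (d : Vec → Vec) (m l p : Fin 3) : ℝ :=
  dot3 (d (midpoint ℝ (T.faceVtx a m) (T.faceVtx a l))) (T.faceVtx a p - T.faceVtx a 0)

theorem midpointTangential_comm (a : Fin 4) (d : Vec → Vec) (m l : Fin 3) :
    T.midpointTangential a d m l = T.midpointTangential a d l m := by
  funext p
  rw [midpointTangential, midpointTangential, midpoint_comm]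

theorem sum_midpointTangential_right (a : Fin 4) (d : Vec → Vec) :
    ∑ m, ∑ l, T.midpointTangential a d m l l = ∑ m, ∑ l, T.midpointTangential a d m l m := by
  rw [Finset.sum_comm]
  simp only [T.midpointTangential_comm]

section Face

variable {T} {a : Fin 4} {k : ℕ} {d : Vec → Vec} (hd : VPolyDeg 2 d)
  (hvtx : ∀ m, d (T.faceVtx a m) = 0)
  (h : ∀ q, MemRM k (T.outNormal a) q → faceTanMoment T a d q = 0)

include hvtx

theorem midpointTangential_self (m : Fin 3) : T.midpointTangential a d m m = 0 := by
  funext p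
  rw [midpointTangential, midpoint_self, hvtx, dot3_zero_left, Pi.zero_apply]

include hd

theorem dot3_sum_smul_faceVtx {l : Fin 3 → ℝ} (hl : ∑ m, l m = 1) (p : Fin 3) :
    dot3 (d (∑ m, l m • T.faceVtx a m)) (T.faceVtx a p - T.faceVtx a 0)
      = ∑ i, ∑ j, l i * l j * (2 * T.midpointTangential a d i j p) := by
  rw [hd.quadratic_interpolation hvtx hl]
  simp only [dot3_sum_left, dot3_smul_left, midpointTangential]
  exact Finset.sum_congr rfl fun i _ => Finset.sum_congr rfl fun j _ => by ring

theorem dot3_sum_smul_faceVtx_sub {l : Fin 3 → ℝ} (hl : ∑ m, l m = 1) :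
    dot3 (d (∑ m, l m • T.faceVtx a m)) (∑ m, l m • T.faceVtx a m - T.faceVtx a 0)
      = ∑ i, ∑ j, ∑ p, l i * l j * l p * (2 * T.midpointTangential a d i j p) := by
  have hsub : ∑ m, l m • T.faceVtx a m - T.faceVtx a 0
      = ∑ m, l m • (T.faceVtx a m - T.faceVtx a 0) := by
    simp only [smul_sub, Finset.sum_sub_distrib, ← Finset.sum_smul, hl, one_smul]
  rw [hsub]
  simp only [dot3_sum_right, dot3_smul_right, dot3_sum_smul_faceVtx hd hvtx hl, Finset.mul_sum]
  rw [Finset.sum_comm]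
  refine Finset.sum_congr rfl fun i _ => ?_
  rw [Finset.sum_comm]
  exact Finset.sum_congr rfl fun j _ => Finset.sum_congr rfl fun p _ => by ring

theorem setIntegral_dot3_facePt_const (p : Fin 3) :
    ∫ s in refTriangle, dot3 (d (T.facePt a s)) (T.faceVtx a p - T.faceVtx a 0)
      = (∑ m, ∑ l, T.midpointTangential a d m l p) / 12 := by
  have hexpand : ∀ s, dot3 (d (T.facePt a s)) (T.faceVtx a p - T.faceVtx a 0)
      = ∑ i : Fin 3 × Fin 3, (refBary s i.1 * refBary s i.2)
        * (2 * T.midpointTangential a d i.1 i.2 p) := fun s => by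
    rw [facePt, dot3_sum_smul_faceVtx hd hvtx (sum_refBary s), Fintype.sum_prod_type]
  simp only [hexpand]
  rw [setIntegral_refTriangle_sum_mul
    (φ := fun (i : Fin 3 × Fin 3) s => refBary s i.1 * refBary s i.2)
    (fun i => (continuous_refBary i.1).mul (continuous_refBary i.2))
    (fun i => 2 * T.midpointTangential a d i.1 i.2 p)]
  simp only [Fintype.sum_prod_type, Finset.sum_div]
  refine Finset.sum_congr rfl fun m _ => Finset.sum_congr rfl fun l _ => ?_
  obtain rfl | hml := eq_or_ne m l
  · simp only [midpointTangential_self hvtx, Pi.zero_apply, mul_zero, zero_div]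
  · rw [setIntegral_refBary_mul, if_neg hml]
    ring

theorem setIntegral_dot3_facePt_sub :
    ∫ s in refTriangle, dot3 (d (T.facePt a s)) (T.facePt a s - T.faceVtx a 0)
      = (∑ m, ∑ l, ∑ p, T.midpointTangential a d m l p
        + 2 * ∑ m, ∑ l, T.midpointTangential a d m l m) / 60 := by
  have hexpand : ∀ s, dot3 (d (T.facePt a s)) (T.facePt a s - T.faceVtx a 0)
      = ∑ i : Fin 3 × Fin 3 × Fin 3, (refBary s i.1 * refBary s i.2.1 * refBary s i.2.2)
        * (2 * T.midpointTangential a d i.1 i.2.1 i.2.2) := fun s => by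
    simp only [facePt, dot3_sum_smul_faceVtx_sub hd hvtx (sum_refBary s), Fintype.sum_prod_type]
  simp only [hexpand]
  rw [setIntegral_refTriangle_sum_mul
    (φ := fun (i : Fin 3 × Fin 3 × Fin 3) s => refBary s i.1 * refBary s i.2.1 * refBary s i.2.2)
    (fun i => ((continuous_refBary i.1).mul (continuous_refBary i.2.1)).mul
      (continuous_refBary i.2.2))
    (fun i => 2 * T.midpointTangential a d i.1 i.2.1 i.2.2)]
  have hweight : ∀ m l p, (∫ s in refTriangle, refBary s m * refBary s l * refBary s p)
      * (2 * T.midpointTangential a d m l p) = (T.midpointTangential a d m l p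
        + (if m = p then T.midpointTangential a d m l p else 0)
        + if l = p then T.midpointTangential a d m l p else 0) / 60 := fun m l p => by
    obtain rfl | hml := eq_or_ne m l
    · simp only [midpointTangential_self hvtx, Pi.zero_apply, mul_zero, ite_self, add_zero,
        zero_div]
    · rw [setIntegral_refBary_mul_mul hml]
      split_ifs <;> ring
  simp only [Fintype.sum_prod_type, hweight, ← Finset.sum_div, Finset.sum_add_distrib,
    Finset.sum_ite_eq, Finset.mem_univ, if_true, sum_midpointTangential_right]
  ring

include h

theorem sum_midpointTangential_const (p : Fin 3) :
    ∑ m, ∑ l, T.midpointTangential a d m l p = 0 := by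
  set z := T.faceVtx a p - T.faceVtx a 0
  have hz : dot3 (T.outNormal a) z = 0 := by
    rw [dot3_comm]
    exact T.dot3_sub_outNormal_of_mem_face (T.faceVtx_mem_face a p) (T.faceVtx_mem_face a 0)
  have hrm : MemRM k (T.outNormal a) fun _ => cross3 (T.outNormal a) z :=
    ⟨_, 0, dot3_cross3_self _ _, fun _ => rfl, fun x => by rw [zero_smul, add_zero]⟩
  have hmoment := T.setIntegral_dot3_eq_zero_of_faceTanMoment (w := fun _ => z)
    (fun _ _ => hz) (h _ hrm)
  rw [setIntegral_dot3_facePt_const hd hvtx] at hmoment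
  exact (div_eq_zero_iff.1 hmoment).resolve_right (by norm_num)

theorem sum_sum_midpointTangential : ∑ m, ∑ l, ∑ p, T.midpointTangential a d m l p = 0 := by
  have hconst := sum_midpointTangential_const hd hvtx h
  simp only [Fin.sum_univ_three] at hconst ⊢
  linarith [hconst 0, hconst 1, hconst 2]

theorem sum_midpointTangential_linear_of_two_le (hk : 2 ≤ k) :
    ∑ m, ∑ l, T.midpointTangential a d m l m = 0 := by
  set n := T.outNormal a
  set x₀ := T.faceVtx a 0
  have hrm : MemRM k n fun x => cross3 n (x - x₀) := by
    refine ⟨-cross3 n x₀, 1, ?_, fun hk' => absurd hk' (by omega), fun x => ?_⟩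
    · rw [← neg_one_smul ℝ, dot3_smul_left, dot3_cross3_self, mul_zero]
    · simp only [cross3_eq_crossProduct, map_sub]
      module
  have hmoment := T.setIntegral_dot3_eq_zero_of_faceTanMoment (w := fun x => x - x₀)
    (fun x hx => by
      rw [dot3_comm]
      exact T.dot3_sub_outNormal_of_mem_face hx (T.faceVtx_mem_face a 0)) (h _ hrm)
  rw [setIntegral_dot3_facePt_sub hd hvtx, sum_sum_midpointTangential hd hvtx h] at hmoment
  linarith

/-- Both sides of the quadratic interpolation formula for `x ↦ d x ⋅ (x - x₀)` at the barycentre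
of the face are evaluated. -/
theorem sum_midpointTangential_linear_of_polyDeg
    (hdx : PolyDeg 2 fun x => dot3 (d x) (x - T.faceVtx a 0)) :
    ∑ m, ∑ l, T.midpointTangential a d m l m = 0 := by
  have hl : ∑ _m : Fin 3, (3⁻¹ : ℝ) = 1 := by norm_num
  have hmid : ∀ m l, dot3 (d (midpoint ℝ (T.faceVtx a m) (T.faceVtx a l)))
      (midpoint ℝ (T.faceVtx a m) (T.faceVtx a l) - T.faceVtx a 0)
      = 2⁻¹ * (T.midpointTangential a d m l m + T.midpointTangential a d m l l) := fun m l => by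
    rw [midpointTangential, midpointTangential, ← dot3_add_right, ← dot3_smul_right,
      midpoint_eq_smul_add, invOf_eq_inv]
    congr 1
    module
  have hbarycentre := hdx.quadratic_interpolation (T.faceVtx a) hl
  simp only [dot3_sum_smul_faceVtx_sub hd hvtx hl, hvtx, dot3_zero_left, hmid, mul_zero,
    ← Finset.mul_sum, Finset.sum_add_distrib, sum_sum_midpointTangential hd hvtx h,
    sum_midpointTangential_right, Finset.sum_const_zero] at hbarycentre
  linarith

end Face

theorem midpointTangential_eq_zero {k : ℕ} (hk₁ : 1 ≤ k) (hk₂ : k ≤ 2) {d : Vec → Vec}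
    (hd : MemND k d) {a : Fin 4} (hvtx : ∀ m, d (T.faceVtx a m) = 0)
    (hedge : ∀ m l, dot3 (d (midpoint ℝ (T.faceVtx a m) (T.faceVtx a l)))
      (T.faceVtx a l - T.faceVtx a m) = 0)
    (h : ∀ q, MemRM k (T.outNormal a) q → faceTanMoment T a d q = 0) (m l p : Fin 3) :
    T.midpointTangential a d m l p = 0 := by
  have hd₂ := hd.vpolyDeg hk₂
  refine eq_zero_of_midpoint_tangential_relations (T.midpointTangential_comm a d)
    (midpointTangential_self hvtx) (fun m l => ?_) (fun m l => ?_)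
    (sum_midpointTangential_const hd₂ hvtx h) ?_ m l p
  · rw [midpointTangential, sub_self, dot3_zero_right]
  · rw [← sub_eq_zero, midpointTangential, midpointTangential, ← dot3_sub_right,
      sub_sub_sub_cancel_right, dot3_comm, ← neg_sub, ← neg_one_smul ℝ, dot3_smul_left, dot3_comm,
      hedge, mul_zero]
  · obtain rfl | hk := hk₁.eq_or_lt
    · exact sum_midpointTangential_linear_of_polyDeg hd₂ hvtx h (hd.polyDeg_dot3_sub _)
    · exact sum_midpointTangential_linear_of_two_le hd₂ hvtx h hk

theorem eq_zero_of_edgeMoment_of_faceTanMoment {k : ℕ} (hk₁ : 1 ≤ k) (hk₂ : k ≤ 2)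
    {d : Vec → Vec} (hd : MemND k d)
    (hedge : ∀ a b, a ≠ b → ∀ q, PolyDeg k q → edgeMoment T a b d q = 0)
    (hface : ∀ a q, MemRM k (T.outNormal a) q → faceTanMoment T a d q = 0) : d = 0 := by
  have hd₂ := hd.vpolyDeg hk₂
  have hline : ∀ a b, ∀ t ∈ Set.Icc (0 : ℝ) 1,
      dot3 (d (T.vtx a + t • (T.vtx b - T.vtx a))) (T.vtx b - T.vtx a) = 0 := fun a b t ht => by
    obtain rfl | hab := eq_or_ne a b
    · rw [sub_self, dot3_zero_right]
    · exact T.dot3_edge_eq_zero_of_edgeMoment hk₁ hd hd₂.continuous hab (hedge a b hab) ht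
  have hvtx : ∀ a, d (T.vtx a) = 0 := fun a =>
    T.eq_zero_of_dot3_vtx_sub_eq_zero fun b => by
      simpa only [zero_smul, add_zero] using hline a b 0 (by simp)
  have hmid : ∀ a b, dot3 (d (midpoint ℝ (T.vtx a) (T.vtx b))) (T.vtx b - T.vtx a) = 0 :=
    fun a b => by
      have hhalf := hline a b 2⁻¹ (by norm_num)
      rwa [show T.vtx a + (2⁻¹ : ℝ) • (T.vtx b - T.vtx a) = midpoint ℝ (T.vtx a) (T.vtx b) by
        rw [midpoint_eq_smul_add, invOf_eq_inv]; module] at hhalf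
  have hmidpoint : ∀ a b, d (midpoint ℝ (T.vtx a) (T.vtx b)) = 0 := fun a b => by
    refine T.eq_zero_of_dot3_vtx_sub_eq_zero (x₀ := T.vtx a) fun c => ?_
    obtain ⟨e, hae, hbe, hce⟩ : ∃ e : Fin 4, a ≠ e ∧ b ≠ e ∧ c ≠ e := by
      revert a b c
      decide
    obtain ⟨m, rfl⟩ := Fin.exists_succAbove_eq hae
    obtain ⟨l, rfl⟩ := Fin.exists_succAbove_eq hbe
    obtain ⟨p, rfl⟩ := Fin.exists_succAbove_eq hce
    have htan := T.midpointTangential_eq_zero hk₁ hk₂ hd (fun _ => hvtx _) (fun _ _ => hmid _ _)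
      (hface e) m l
    rw [← sub_sub_sub_cancel_right _ _ (T.faceVtx e 0), dot3_sub_right]
    exact sub_eq_zero.2 ((htan p).trans (htan m).symm)
  funext x
  ext i
  exact congrFun ((hd₂ i).eq_zero_of_midpoint_eq_zero T.affineBasis fun a b =>
    congrFun (hmidpoint a b) i) x

end Tetra

/-! ### Bubble enrichments determined by moments -/

theorem MemRM.continuous {k : ℕ} {n : Vec} {q : Vec → Vec} (hq : MemRM k n q) :
    Continuous q := by
  obtain ⟨a, c, -, -, h⟩ := hq
  rw [funext h]
  exact continuous_const.add (((VPolyDeg.const 0 n).cross3 .coord).continuous.const_smul c)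

theorem MemRT.continuous {n : Vec} {q : Vec → Vec} (hq : MemRT n q) : Continuous q := by
  obtain ⟨a, c, -, h⟩ := hq
  rw [funext h]
  have hdot : Continuous fun x : Vec => dot3 x n := (VPolyDeg.coord.dot3 (.const 0 n)).continuous
  fun_prop

theorem MemND.sub {k : ℕ} {u v : Vec → Vec} (hu : MemND k u) (hv : MemND k v) :
    MemND k fun x => u x - v x := by
  obtain ⟨q, p, hq, hp, hu⟩ := hu
  obtain ⟨q', p', hq', hp', hv⟩ := hv
  refine ⟨_, _, hq.sub hq', hp.sub hp', fun x => ?_⟩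
  have hgrad : grad3 (fun x => q x - q' x) x = grad3 q x - grad3 q' x := funext fun i =>
    pd_sub hq.differentiable.differentiableAt hq'.differentiable.differentiableAt i
  simp only [hu, hv, hgrad, cross3_eq_crossProduct, map_sub]
  abel

namespace Tetra

variable (T : Tetra)

theorem isCompact_edge (a b : Fin 4) : IsCompact (T.edge a b) := by
  rw [edge, ← convexHull_pair]
  exact (Set.toFinite _).isCompact_convexHull ℝ

theorem edge_subset_face {a b e : Fin 4} (ha : a ≠ e) (hb : b ≠ e) : T.edge a b ⊆ T.face e :=
  segment_subset_convexHull ⟨a, ha, rfl⟩ ⟨b, hb, rfl⟩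

theorem bubble_eq_zero_of_mem_face {a : Fin 4} {x : Vec} (hx : x ∈ T.face a) :
    T.bubble x = 0 := by
  rw [T.bubble_eq a, T.bary_eq_zero_of_mem_face hx, zero_mul]

theorem bubble_eq_zero_of_mem_edge {a b : Fin 4} {x : Vec} (hx : x ∈ T.edge a b) :
    T.bubble x = 0 := by
  obtain ⟨e, ha, hb⟩ : ∃ e : Fin 4, a ≠ e ∧ b ≠ e := by
    clear hx
    revert a b
    decide
  exact T.bubble_eq_zero_of_mem_face (T.edge_subset_face ha hb hx)

theorem dot3_curl3_bubble_smul_outNormal {r : Vec → Vec} (hr : Differentiable ℝ r) {a : Fin 4}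
    {x : Vec} (hx : x ∈ T.face a) :
    dot3 (curl3 (fun y => T.bubble y • r y) x) (T.outNormal a) = 0 := by
  obtain ⟨κ, -, hκ⟩ := T.exists_outNormal_eq_smul_gradBary a
  rw [T.curl3_bubble_smul (T.bary_eq_zero_of_mem_face hx) hr.differentiableAt, hκ, dot3_smul_left,
    dot3_smul_right, dot3_cross3_self, mul_zero, mul_zero]

section Congr

variable {T} {a b : Fin 4} {u v : Vec → Vec}

theorem edgeMoment_congr (h : Set.EqOn u v (T.edge a b)) (q : Vec → ℝ) :
    edgeMoment T a b u q = edgeMoment T a b v q :=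
  setIntegral_congr_fun (T.isCompact_edge a b).measurableSet fun x hx => by simp only [h hx]

theorem faceTanMoment_congr (h : Set.EqOn u v (T.face a)) (q : Vec → Vec) :
    faceTanMoment T a u q = faceTanMoment T a v q :=
  setIntegral_congr_fun (T.isCompact_face a).measurableSet fun x hx => by simp only [h hx]

theorem faceNorMoment_congr
    (h : ∀ x ∈ T.face a, dot3 (u x) (T.outNormal a) = dot3 (v x) (T.outNormal a)) (q : Vec → ℝ) :
    faceNorMoment T a u q = faceNorMoment T a v q :=
  setIntegral_congr_fun (T.isCompact_face a).measurableSet fun x hx => by simp only [h x hx]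

theorem faceTanMoment_eq_zero (h : Set.EqOn u 0 (T.face a)) (q : Vec → Vec) :
    faceTanMoment T a u q = 0 := by
  rw [faceTanMoment_congr h, faceTanMoment]
  simp [cross3, dot3, Fin.sum_univ_three]

end Congr

section Sub

variable {u v : Vec → Vec} (hu : Continuous u) (hv : Continuous v)

include hu hv

theorem edgeMoment_sub {a b : Fin 4} (hab : a ≠ b) {q : Vec → ℝ} (hq : Continuous q) :
    edgeMoment T a b (fun x => u x - v x) q = edgeMoment T a b u q - edgeMoment T a b v q := by
  obtain ⟨c, -, hint⟩ := T.exists_setIntegral_edge_eq hab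
  have hcont : ∀ {w : Vec → Vec}, Continuous w → IntegrableOn (fun t : ℝ =>
      dot3 (w (T.vtx a + t • (T.vtx b - T.vtx a))) (T.tangent a b)
        * q (T.vtx a + t • (T.vtx b - T.vtx a))) (Set.Icc 0 1) := fun hw => by
    refine ContinuousOn.integrableOn_compact isCompact_Icc (Continuous.continuousOn ?_)
    simp only [dot3]
    fun_prop
  simp only [edgeMoment, hint, dot3_sub_left, sub_mul, integral_sub (hcont hu) (hcont hv), mul_sub]

theorem faceTanMoment_sub (a : Fin 4) {q : Vec → Vec} (hq : Continuous q) :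
    faceTanMoment T a (fun x => u x - v x) q
      = faceTanMoment T a u q - faceTanMoment T a v q := by
  obtain ⟨c, -, hint⟩ := T.exists_setIntegral_face_eq a
  have hfacePt := T.continuous_facePt a
  have hcont : ∀ {w : Vec → Vec}, Continuous w → IntegrableOn (fun s =>
      dot3 (cross3 (w (T.facePt a s)) (T.outNormal a)) (q (T.facePt a s))) refTriangle :=
    fun hw => integrableOn_refTriangle (by
      simp only [dot3, Fin.sum_univ_three, cross3, Matrix.cons_val]
      fun_prop)
  simp only [faceTanMoment, hint, cross3_sub_left, dot3_sub_left,
    integral_sub (hcont hu) (hcont hv), mul_sub]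

theorem faceNorMoment_sub (a : Fin 4) {q : Vec → ℝ} (hq : Continuous q) :
    faceNorMoment T a (fun x => u x - v x) q
      = faceNorMoment T a u q - faceNorMoment T a v q := by
  obtain ⟨c, -, hint⟩ := T.exists_setIntegral_face_eq a
  have hfacePt := T.continuous_facePt a
  have hcont : ∀ {w : Vec → Vec}, Continuous w → IntegrableOn (fun s =>
      dot3 (w (T.facePt a s)) (T.outNormal a) * q (T.facePt a s)) refTriangle :=
    fun hw => integrableOn_refTriangle (by
      simp only [dot3]
      fun_prop)
  simp only [faceNorMoment, hint, dot3_sub_left, sub_mul, integral_sub (hcont hu) (hcont hv),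
    mul_sub]

end Sub

variable {T}

theorem eq_of_faceTanMoment_add_curl3_bubble_smul {c r r' : Vec → Vec} (hc : Continuous c)
    (hr : VPolyDeg 1 r) (hr' : VPolyDeg 1 r')
    (h : ∀ a q, MemRT (T.outNormal a) q →
      faceTanMoment T a (fun x => c x + curl3 (fun y => T.bubble y • r y) x) q
        = faceTanMoment T a (fun x => c x + curl3 (fun y => T.bubble y • r' y) x) q) :
    r = r' := by
  have hbr := hr.smul T.polyDeg_bubble
  have hbr' := hr'.smul T.polyDeg_bubble
  have hcurl : (curl3 fun y => T.bubble y • (r y - r' y))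
      = fun x => (c x + curl3 (fun y => T.bubble y • r y) x)
        - (c x + curl3 (fun y => T.bubble y • r' y) x) := by
    funext x
    simp only [smul_sub]
    rw [add_sub_add_left_eq_sub, curl3_sub hbr.differentiable.differentiableAt
      hbr'.differentiable.differentiableAt]
  refine sub_eq_zero.1 (T.eq_zero_of_faceTanMoment_curl3_bubble_smul (hr.sub hr') fun a q hq => ?_)
  change faceTanMoment T a (curl3 fun y => T.bubble y • (r y - r' y)) q = 0
  rw [hcurl, T.faceTanMoment_sub (hc.fun_add (VPolyDeg.curl3 hbr).continuous)
    (hc.fun_add (VPolyDeg.curl3 hbr').continuous) a hq.continuous, h a q hq, sub_self]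

theorem curl3_add_bubble_smul {k : ℕ} (hk : k ≤ 2) {N r : Vec → Vec} (hN : MemND k N)
    (hr : VPolyDeg 1 r) :
    (curl3 fun x => N x + T.bubble x • r x)
      = fun x => curl3 N x + curl3 (fun y => T.bubble y • r y) x :=
  funext fun _ => curl3_add (hN.vpolyDeg hk).differentiable.differentiableAt
    (hr.smul T.polyDeg_bubble).differentiable.differentiableAt

end Tetra

open Tetra in
theorem MemVd.exists_eq_add_curl3_bubble_smul {T : Tetra} {y B : Vec → Vec} (hy : MemVd T y)
    (hB : VPolyDeg 1 B)
    (h : ∀ a q, PolyDeg 1 q → faceNorMoment T a y q = faceNorMoment T a B q) :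
    ∃ r, VPolyDeg 1 r ∧ y = fun x => B x + curl3 (fun y => T.bubble y • r y) x := by
  obtain ⟨p, r, b, hb, hp, hr, hy⟩ := hy
  obtain rfl := hb.eq_bubble
  have hpB := T.eq_zero_of_faceNorMoment (hp.sub hB) fun a q hq => by
    rw [T.faceNorMoment_sub hp.continuous hB.continuous a hq.continuous, ← h a q hq, sub_eq_zero]
    refine faceNorMoment_congr (fun x hx => ?_) q
    rw [hy, dot3_add_left, T.dot3_curl3_bubble_smul_outNormal hr.differentiable hx, add_zero]
  obtain rfl := sub_eq_zero.1 hpB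
  exact ⟨r, hr, funext hy⟩

/-- The fields `B + curl (b r)` and `B` differ by a curl, which is divergence free. -/
theorem MemVd.div3_eq {T : Tetra} {y B : Vec → Vec} (hy : MemVd T y) (hB : VPolyDeg 1 B)
    (h : ∀ a q, PolyDeg 1 q → faceNorMoment T a y q = faceNorMoment T a B q) :
    div3 y = div3 B := by
  obtain ⟨r, hr, rfl⟩ := hy.exists_eq_add_curl3_bubble_smul hB h
  have hbr := hr.smul T.polyDeg_bubble
  funext x
  rw [div3_add hB.differentiable.differentiableAt
    (VPolyDeg.curl3 hbr).differentiable.differentiableAt, div3_curl3 hbr.contDiff, add_zero]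

namespace MemW

variable {k : ℕ} (hk₁ : 1 ≤ k) (hk₂ : k ≤ 2) {T : Tetra} {w N : Vec → Vec} (hw : MemW k T w)
  (hN : MemND k N)
  (hedge : ∀ a b, a ≠ b → ∀ q, PolyDeg k q → edgeMoment T a b w q = edgeMoment T a b N q)
  (hface : ∀ a q, MemRM k (T.outNormal a) q → faceTanMoment T a w q = faceTanMoment T a N q)

include hk₁ hk₂ hw hN hedge hface

open Tetra in
theorem exists_eq_add_bubble_smul :
    ∃ r, VPolyDeg 1 r ∧ w = fun x => N x + T.bubble x • r x := by
  obtain ⟨q, p, r, b, hb, hq, hp, hr, hw⟩ := hw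
  obtain rfl := hb.eq_bubble
  have hnd : MemND k fun x => grad3 q x + cross3 x (p x) := ⟨q, p, hq, hp, fun _ => rfl⟩
  have hndc := (hnd.vpolyDeg hk₂).continuous
  have hNc := (hN.vpolyDeg hk₂).continuous
  have hsub := T.eq_zero_of_edgeMoment_of_faceTanMoment hk₁ hk₂ (hnd.sub hN)
    (fun a b hab s hs => by
      rw [T.edgeMoment_sub hndc hNc hab hs.continuous, ← hedge a b hab s hs, sub_eq_zero]
      refine edgeMoment_congr (fun x hx => ?_) s
      rw [hw, T.bubble_eq_zero_of_mem_edge hx, zero_smul, add_zero])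
    (fun a s hs => by
      rw [T.faceTanMoment_sub hndc hNc a hs.continuous, ← hface a s hs, sub_eq_zero]
      refine faceTanMoment_congr (fun x hx => ?_) s
      rw [hw, T.bubble_eq_zero_of_mem_face hx, zero_smul, add_zero])
  refine ⟨r, hr, funext fun x => ?_⟩
  rw [hw, sub_eq_zero.1 (congrFun hsub x)]

open Tetra in
theorem eq_of_moments_eq
    (hcurl : ∀ a q, MemRT (T.outNormal a) q →
      faceTanMoment T a (curl3 w) q = faceTanMoment T a (curl3 N) q) : w = N := by
  obtain ⟨r, hr, rfl⟩ := hw.exists_eq_add_bubble_smul hk₁ hk₂ hN hedge hface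
  have hzero : (curl3 fun y => T.bubble y • (0 : Vec)) = 0 := by
    ext x i
    fin_cases i <;> simp [curl3, pd]
  have hr₀ : r = fun _ => 0 := by
    refine eq_of_faceTanMoment_add_curl3_bubble_smul (T := T)
      (hN.vpolyDeg hk₂).curl3.continuous hr (.const 1 0) fun a q hq => ?_
    simpa only [curl3_add_bubble_smul hk₂ hN hr, hzero, Pi.zero_apply, add_zero] using hcurl a q hq
  simp only [hr₀, smul_zero, add_zero]

open Tetra in
theorem eq_curl3_of_moments_eq {y : Vec → Vec} (hy : MemVd T y)
    (hnor : ∀ a q, PolyDeg 1 q → faceNorMoment T a y q = faceNorMoment T a (curl3 N) q)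
    (htan : ∀ a q, MemRT (T.outNormal a) q →
      faceTanMoment T a y q = faceTanMoment T a (curl3 w) q) : y = curl3 w := by
  have hcurl : VPolyDeg 1 (curl3 N) := (hN.vpolyDeg hk₂).curl3
  obtain ⟨r, hr, rfl⟩ := hw.exists_eq_add_bubble_smul hk₁ hk₂ hN hedge hface
  obtain ⟨r', hr', rfl⟩ := hy.exists_eq_add_curl3_bubble_smul hcurl hnor
  rw [curl3_add_bubble_smul hk₂ hN hr] at htan ⊢
  rw [eq_of_faceTanMoment_add_curl3_bubble_smul hcurl.continuous hr' hr htan]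

end MemW

/-! ### Faces of a mesh -/

namespace Tetra

variable (T : Tetra)

/-- The relative interior of the face opposite to vertex `a`. -/
def faceInterior (a : Fin 4) : Set Vec := {x | T.bary a x = 0 ∧ ∀ l, l ≠ a → 0 < T.bary l x}

theorem faceInterior_subset_K (a : Fin 4) : T.faceInterior a ⊆ T.K := fun x hx =>
  T.mem_K_iff.2 fun l => by
    rcases eq_or_ne l a with rfl | hl
    · exact hx.1.ge
    · exact (hx.2 l hl).le

theorem face_subset_closure_faceInterior (a : Fin 4) :
    T.face a ⊆ closure (T.faceInterior a) := by
  intro x hx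
  have hx' := T.mem_face_iff.1 hx
  set c := T.facePt a (1 / 3, 1 / 3)
  have hc : ∀ m, T.bary (a.succAbove m) c = 1 / 3 := fun m => by
    rw [T.bary_succAbove_facePt]
    fin_cases m <;> norm_num [refBary]
  have hlim : Filter.Tendsto (fun t : ℝ => AffineMap.lineMap x c t) (nhdsWithin 0 (Set.Ioi 0))
      (nhds x) := by
    have hcont := (AffineMap.lineMap_continuous (p := x) (q := c) (R := ℝ)).tendsto 0
    rw [AffineMap.lineMap_apply_zero] at hcont
    exact hcont.mono_left nhdsWithin_le_nhds
  refine mem_closure_of_tendsto hlim ?_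
  filter_upwards [Ioo_mem_nhdsGT one_pos] with t ht
  refine ⟨?_, fun l hl => ?_⟩
  · rw [AffineMap.apply_lineMap, T.bary_facePt, hx'.2, AffineMap.lineMap_same_apply]
  · obtain ⟨m, rfl⟩ := Fin.exists_succAbove_eq hl
    rw [AffineMap.apply_lineMap, hc, AffineMap.lineMap_apply_ring]
    have hpos := hx'.1 (a.succAbove m)
    nlinarith [ht.1, ht.2]

theorem nonempty_interior_K : (interior T.K).Nonempty :=
  interior_convexHull_nonempty_iff_affineSpan_eq_top.2 T.affineBasis.tot

theorem closure_interior_K : closure (interior T.K) = T.K := by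
  have hconv : Convex ℝ T.K := convex_convexHull ℝ _
  rw [hconv.closure_interior_eq_closure_of_nonempty_interior T.nonempty_interior_K,
    T.isCompact_K.isClosed.closure_eq]

end Tetra

namespace Mesh

variable (M : Mesh) {i j : Fin M.n} {a : Fin 4}

theorem K_subset_closure_domain (i : Fin M.n) : (M.el i).K ⊆ closure M.domain := by
  rw [← (M.el i).closure_interior_K]
  exact closure_mono (interior_mono (Set.subset_iUnion (fun i => (M.el i).K) i))

theorem not_K_subset_K (hij : i ≠ j) : ¬(M.el i).K ⊆ (M.el j).K := fun hsub => by
  obtain ⟨y, hy⟩ := (M.el i).nonempty_interior_K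
  exact (M.disj i j hij).subset ⟨hy, interior_mono hsub hy⟩

theorem exists_face_eq_face (hij : i ≠ j) {x : Vec} (hx : x ∈ (M.el i).faceInterior a)
    (hxj : x ∈ (M.el j).K) : ∃ b, (M.el i).face a = (M.el j).face b := by
  obtain ⟨s, e, hse, hK⟩ := M.conform i j hij
  have hmem : x ∈ convexHull ℝ ((M.el i).vtx '' s) :=
    hK ▸ ⟨(M.el i).faceInterior_subset_K a hx, hxj⟩
  have hcompl : {a}ᶜ ⊆ s := fun l hl => by
    by_contra hls
    exact (hx.2 l hl).ne' (((M.el i).mem_convexHull_vtx_image_iff.1 hmem).2 l hls)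
  have ha : a ∉ s := fun ha => by
    have hs : s = Set.univ := Set.eq_univ_of_forall fun l => by
      rcases eq_or_ne l a with rfl | hl
      exacts [ha, hcompl hl]
    rw [hs, Set.image_univ] at hK
    exact M.not_K_subset_K hij (Set.inter_eq_left.1 hK)
  have hs : s = {a}ᶜ := (Set.subset_compl_singleton_iff.2 ha).antisymm hcompl
  obtain ⟨b, hb⟩ : ∃ b, eᶜ = {b} := by
    have hcard := congrArg Set.ncard hse
    rw [Set.ncard_image_of_injective _ (M.el i).indep.injective,
      Set.ncard_image_of_injective _ (M.el j).indep.injective, hs] at hcard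
    rw [← Set.ncard_eq_one, Set.ncard_compl, ← hcard, Set.ncard_compl]
    simp
  refine ⟨b, ?_⟩
  change convexHull ℝ ((M.el i).vtx '' {a}ᶜ) = convexHull ℝ ((M.el j).vtx '' {b}ᶜ)
  rw [← hs, ← hb, compl_compl, hse]

/-- Were such a point interior to the mesh, moving it slightly away from vertex `a` would stay in
`(M.el i).K`, the other elements being closed, although the barycentric coordinate of `a` becomes
negative. -/
theorem faceInterior_subset_frontier_domain
    (hdisj : ∀ j, i ≠ j → Disjoint ((M.el i).faceInterior a) (M.el j).K) :
    (M.el i).faceInterior a ⊆ frontier M.domain := by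
  intro x hx
  refine ⟨M.K_subset_closure_domain i ((M.el i).faceInterior_subset_K a hx), fun hxo => ?_⟩
  set p : ℝ → Vec := fun t => AffineMap.lineMap x ((M.el i).vtx a) t
  have hp : Filter.Tendsto p (nhdsWithin 0 (Set.Iio 0)) (nhds x) := by
    have hcont := (AffineMap.lineMap_continuous (p := x) (q := (M.el i).vtx a) (R := ℝ)).tendsto 0
    rw [AffineMap.lineMap_apply_zero] at hcont
    exact hcont.mono_left nhdsWithin_le_nhds
  have hother : ∀ᶠ t in nhdsWithin 0 (Set.Iio 0), ∀ j, i ≠ j → p t ∉ (M.el j).K := by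
    refine Filter.eventually_all.2 fun j => ?_
    by_cases hij : i = j
    · simp only [hij, ne_eq, not_true_eq_false, false_implies, Filter.eventually_true]
    · filter_upwards [hp.eventually ((M.el j).isCompact_K.isClosed.isOpen_compl.mem_nhds
        (Set.disjoint_left.1 (hdisj j hij) hx))] with t ht _ using ht
  obtain ⟨t, ⟨hdom, hnot⟩, ht⟩ := ((hp.eventually (isOpen_interior.mem_nhds hxo)).and
    hother |>.and self_mem_nhdsWithin).exists
  obtain ⟨j, hj⟩ := Set.mem_iUnion.1 (interior_subset (interior_subset hdom))
  obtain rfl : i = j := by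
    by_contra hij
    exact hnot j hij hj
  have hbary := (M.el i).mem_K_iff.1 hj a
  rw [AffineMap.apply_lineMap, hx.1, (M.el i).bary_vtx, if_pos rfl, AffineMap.lineMap_apply_ring,
    mul_zero, zero_add, mul_one] at hbary
  exact hbary.not_gt ht

theorem exists_face_eq_or_face_subset_frontier (i : Fin M.n) (a : Fin 4) :
    (∃ j b, i ≠ j ∧ (M.el i).face a = (M.el j).face b)
      ∨ (M.el i).face a ⊆ frontier M.domain := by
  by_cases hdisj : ∀ j, i ≠ j → Disjoint ((M.el i).faceInterior a) (M.el j).K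
  · exact .inr (((M.el i).face_subset_closure_faceInterior a).trans
      (closure_minimal (M.faceInterior_subset_frontier_domain hdisj) isClosed_frontier))
  · push Not at hdisj
    obtain ⟨j, hij, hmeet⟩ := hdisj
    obtain ⟨x, hx, hxj⟩ := Set.not_disjoint_iff.1 hmeet
    obtain ⟨b, hb⟩ := M.exists_face_eq_face hij hx hxj
    exact .inl ⟨j, b, hij, hb⟩

end Mesh

/-! ### Weak derivatives of functions extended by zero -/

theorem TestS.pd {φ : Vec → ℝ} (hφ : TestS φ) (i : Fin 3) : TestS (pd i φ) :=
  ⟨contDiff_pd hφ.1 le_rfl i, hφ.2.fderiv_apply ℝ _⟩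

theorem TestS.sub {φ ψ : Vec → ℝ} (hφ : TestS φ) (hψ : TestS ψ) :
    TestS fun x => φ x - ψ x :=
  ⟨hφ.1.sub hψ.1, hφ.2.sub hψ.2⟩

theorem TestV.apply {φ : Vec → Vec} (hφ : TestV φ) (i : Fin 3) : TestS fun x => φ x i :=
  ⟨contDiff_pi.1 hφ.1 i, hφ.2.comp_left (g := fun v : Vec => v i) rfl⟩

theorem TestV.curl3_apply {φ : Vec → Vec} (hφ : TestV φ) (i : Fin 3) :
    TestS fun x => curl3 φ x i := by
  have hpd : ∀ a b, TestS (_root_.pd a fun y => φ y b) := fun a b => (hφ.apply b).pd a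
  fin_cases i
  exacts [(hpd 1 2).sub (hpd 2 1), (hpd 2 0).sub (hpd 0 2), (hpd 0 1).sub (hpd 1 0)]

theorem zextV_apply (Ω : Set Vec) (v : Vec → Vec) (x : Vec) (i : Fin 3) :
    zextV Ω v x i = zextS Ω (fun y => v y i) x := by
  by_cases hx : x ∈ Ω <;> simp [zextV, zextS, hx]

theorem MemL2V.apply {Ω : Set Vec} {v : Vec → Vec} (hv : MemL2V Ω v) (i : Fin 3) :
    MemL2S Ω fun x => v x i :=
  (ContinuousLinearMap.proj (R := ℝ) (φ := fun _ : Fin 3 => ℝ) i).comp_memLp' hv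

theorem MemL2S.integrable_zextS_mul {Ω : Set Vec} (hΩ : MeasurableSet Ω) {f φ : Vec → ℝ}
    (hf : MemL2S Ω f) (hφ : TestS φ) : Integrable fun x => zextS Ω f x * φ x :=
  have hφL2 : MemLp φ 2 := hφ.1.continuous.memLp_of_hasCompactSupport hφ.2
  ((memLp_indicator_iff_restrict hΩ).2 hf).integrable_mul hφL2

theorem MemH01S.memH0Curl {Ω : Set Vec} (hΩ : MeasurableSet Ω) {f : Vec → ℝ} {g : Vec → Vec}
    (hf : MemH01S Ω f g) : MemH0Curl Ω g fun _ => 0 := by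
  obtain ⟨hfL2, hgL2, hweak⟩ := hf
  refine ⟨hgL2, MemLp.zero, fun φ hφ => ?_⟩
  have hzero : ∀ x, dot3 (zextV Ω (fun _ => (0 : Vec)) x) (φ x) = 0 := fun x => by
    rw [zextV, Set.indicator_zero, dot3_zero_left]
  have hdiv : ∀ x, div3 (curl3 φ) x = 0 := fun x =>
    div3_curl3 (contDiff_infty.1 hφ.1 2)
  have hint : ∀ i, Integrable fun x => zextV Ω g x i * curl3 φ x i := fun i => by
    simpa only [zextV_apply] using (hgL2.apply i).integrable_zextS_mul hΩ (hφ.curl3_apply i)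
  calc ∫ x, dot3 (zextV Ω (fun _ => (0 : Vec)) x) (φ x)
      = -∫ x, zextS Ω f x * div3 (curl3 φ) x := by
        simp only [hzero, hdiv, mul_zero, integral_zero, neg_zero]
    _ = ∑ i, -∫ x, zextS Ω f x * pd i (fun y => curl3 φ y i) x := by
        simp only [div3, Finset.mul_sum]
        rw [integral_finsetSum _ fun i _ => hfL2.integrable_zextS_mul hΩ ((hφ.curl3_apply i).pd i),
          Finset.sum_neg_distrib]
    _ = ∑ i, ∫ x, zextV Ω g x i * curl3 φ x i :=
        Finset.sum_congr rfl fun i _ => (hweak i _ (hφ.curl3_apply i)).symm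
    _ = ∫ x, dot3 (zextV Ω g x) (curl3 φ x) := (integral_finsetSum _ fun i _ => hint i).symm

theorem MemH01V.memH0Div {Ω : Set Vec} (hΩ : MeasurableSet Ω) {v : Vec → Vec} {J : Vec → Mat}
    (hv : MemH01V Ω v J) : MemH0Div Ω v fun x => ∑ c, J x c c := by
  obtain ⟨hvL2, hJL2, hweak⟩ := hv
  refine ⟨hvL2, memLp_finsetSum _ fun c _ => hJL2 c c, fun φ hφ => ?_⟩
  have htrace : ∀ x, zextS Ω (fun x => ∑ c, J x c c) x = ∑ c, zextS Ω (fun x => J x c c) x :=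
    fun x => congrFun (Finset.indicator_sum Finset.univ Ω fun c x => J x c c) x
  calc ∫ x, zextS Ω (fun x => ∑ c, J x c c) x * φ x
      = ∑ c, ∫ x, zextS Ω (fun x => J x c c) x * φ x := by
        simp only [htrace, Finset.sum_mul]
        exact integral_finsetSum _ fun c _ => (hJL2 c c).integrable_zextS_mul hΩ hφ
    _ = ∑ c, -∫ x, zextS Ω (fun x => v x c) x * pd c φ x :=
        Finset.sum_congr rfl fun c _ => hweak c c φ hφ
    _ = -∫ x, dot3 (zextV Ω v x) (grad3 φ x) := by
        simp only [dot3, zextV_apply, grad3]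
        rw [integral_finsetSum _ fun c _ => (hvL2.apply c).integrable_zextS_mul hΩ (hφ.pd c),
          Finset.sum_neg_distrib]

/-! ### The commuting diagrams -/

namespace FW

open Tetra

variable {k : ℕ} {M : Mesh}

section Moments

variable {Ω : Set Vec} (F : FW k M Ω) {i j : Fin M.n} {a : Fin 4}
  (hsub : (M.el i).face a ⊆ (M.el j).K) (q : Vec → Vec)

include hsub

theorem faceTanMoment_IBDM {u cu : Vec → Vec} (hu : MemH0Curl Ω u cu) :
    faceTanMoment (M.el i) a (F.IBDM cu j) q
      = faceTanMoment (M.el i) a (curl3 (F.IND u j)) q :=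
  faceTanMoment_congr (fun x hx => F.comm_curl u cu hu j x (hsub hx)) q

theorem faceTanMoment_curl3_IND_eq_zero {u : Vec → Vec} (hu : MemH0Curl Ω u fun _ => 0) :
    faceTanMoment (M.el i) a (curl3 (F.IND u j)) q = 0 := by
  rw [← F.faceTanMoment_IBDM hsub q hu]
  exact faceTanMoment_eq_zero (fun x _ => F.zeroIBDM j x) q

end Moments

theorem div3_eq_avg {Ω : Set Vec} (F : FW k M Ω) {v : Vec → Vec} {dv : Vec → ℝ}
    (hv : MemH0Div Ω v dv) {y : DiscVF M} (hy : ∀ i, MemVd (M.el i) (y i))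
    (hmatch : MatchIdInt M (F.IBDM v) y) (i : Fin M.n) :
    ∀ x ∈ (M.el i).K, div3 (y i) x = avg M dv i := fun x hx => by
  rw [(hy i).div3_eq ((F.mapsIBDM v dv hv).1 i) (hmatch.1 i), F.comm_div v dv hv i x hx]

variable (hk₁ : 1 ≤ k) (hk₂ : k ≤ 2) (F : FW k M M.domain) {w : DiscVF M}
  (hw : ∀ i, MemW k (M.el i) (w i))

include hk₁ hk₂ hw

theorem eq_grad3_Ig {v : Vec → ℝ} {gv : Vec → Vec} (hv : MemH01S M.domain v gv)
    (hmatch : MatchIgcInt k M (F.IND gv) w)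
    (hbdry : ∀ i a, (M.el i).face a ⊆ frontier M.domain → ∀ q, MemRT ((M.el i).outNormal a) q →
      faceTanMoment (M.el i) a (curl3 (w i)) q = 0) (i : Fin M.n) :
    ∀ x ∈ (M.el i).K, w i x = grad3 (F.Ig v i) x := by
  intro x hx
  have hcurl := hv.memH0Curl isOpen_interior.measurableSet
  have hwN : w i = F.IND gv i := (hw i).eq_of_moments_eq hk₁ hk₂
    ((F.mapsIND gv _ hcurl).1 i) (hmatch.1 i) (hmatch.2.1 i) fun a q hq => by
      rw [F.faceTanMoment_curl3_IND_eq_zero ((M.el i).face_subset_K a) q hcurl]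
      rcases M.exists_face_eq_or_face_subset_frontier i a with ⟨j, b, hij, hface⟩ | hfrontier
      · have hsub : (M.el i).face a ⊆ (M.el j).K := hface ▸ (M.el j).face_subset_K b
        rw [hmatch.2.2 i j a b hij hface q hq,
          F.faceTanMoment_curl3_IND_eq_zero ((M.el i).face_subset_K a) q hcurl,
          F.faceTanMoment_curl3_IND_eq_zero hsub q hcurl, add_zero, zero_div]
      · exact hbdry i a hfrontier q hq
  rw [hwN, F.comm_grad v gv hv i x hx]

theorem eq_curl3 {u cu : Vec → Vec} (hu : MemH0Curl M.domain u cu)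
    (hmatch : MatchIgcInt k M (F.IND u) w) {y : DiscVF M} (hy : ∀ i, MemVd (M.el i) (y i))
    (hymatch : MatchIdInt M (F.IBDM cu) y)
    (hbdry : ∀ i a, (M.el i).face a ⊆ frontier M.domain → ∀ q, MemRT ((M.el i).outNormal a) q →
      faceTanMoment (M.el i) a (y i) q = faceTanMoment (M.el i) a (curl3 (w i)) q)
    (i : Fin M.n) : y i = curl3 (w i) := by
  refine (hw i).eq_curl3_of_moments_eq hk₁ hk₂ ((F.mapsIND u cu hu).1 i) (hmatch.1 i)
    (hmatch.2.1 i) (hy i) (fun a q hq => ?_) fun a q hq => ?_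
  · rw [hymatch.1 i a q hq]
    exact faceNorMoment_congr
      (fun x hx => by rw [F.comm_curl u cu hu i x ((M.el i).face_subset_K a hx)]) q
  · rcases M.exists_face_eq_or_face_subset_frontier i a with ⟨j, b, hij, hface⟩ | hfrontier
    · have hsub : (M.el i).face a ⊆ (M.el j).K := hface ▸ (M.el j).face_subset_K b
      rw [hmatch.2.2 i j a b hij hface q hq, hymatch.2 i j a b hij hface q hq,
        F.faceTanMoment_IBDM ((M.el i).face_subset_K a) q hu, F.faceTanMoment_IBDM hsub q hu]
    · exact hbdry i a hfrontier q hq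

end FW

theorem statement5_general (k : ℕ) (hk : k = 1 ∨ k = 2) (M : Mesh) (F : FW k M M.domain) :
    (∀ v gv, MemH01S M.domain v gv → ∀ w, IsIgc0 k M M.domain (F.IND gv) w →
       ∀ i, ∀ x ∈ (M.el i).K, w i x = grad3 (F.Ig v i) x) ∧
    (∀ u cu, MemH0Curl M.domain u cu → ∀ w, IsIgc0 k M M.domain (F.IND u) w →
       ∀ y, IsId0 M M.domain (F.IBDM cu) y → ∀ i, y i = curl3 (w i)) ∧
    (∀ v dv, MemH0Div M.domain v dv → ∀ y, IsId0 M M.domain (F.IBDM v) y →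
       ∀ i, ∀ x ∈ (M.el i).K, div3 (y i) x = avg M dv i) ∧
    (∀ v gv, MemH01S M.domain v gv → ∀ w, IsIgc k M M.domain (F.IND gv) w →
       ∀ i, ∀ x ∈ (M.el i).K, w i x = grad3 (F.Ig v i) x) ∧
    (∀ u cu, MemH0Curl M.domain u cu → ∀ w, IsIgc k M M.domain (F.IND u) w →
       ∀ y, IsId M M.domain (F.IBDM cu) y → ∀ i, y i = curl3 (w i)) ∧
    (∀ v dv, MemH0Div M.domain v dv → ∀ y, IsId M M.domain (F.IBDM v) y →
       ∀ i, ∀ x ∈ (M.el i).K, div3 (y i) x = avg M dv i) := by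
  have hk₁ : 1 ≤ k := by omega
  have hk₂ : k ≤ 2 := by omega
  refine ⟨fun v gv hv w hw => F.eq_grad3_Ig hk₁ hk₂ hw.1.1.1 hv hw.2 hw.1.2,
    fun u cu hu w hw y hy => F.eq_curl3 hk₁ hk₂ hw.1.1.1 hu hw.2 hy.1.1.1 hy.2 ?_,
    fun v dv hv y hy => F.div3_eq_avg hv hy.1.1.1 hy.2,
    fun v gv hv w hw => F.eq_grad3_Ig hk₁ hk₂ hw.1.1 hv hw.2.1 ?_,
    fun u cu hu w hw y hy => F.eq_curl3 hk₁ hk₂ hw.1.1 hu hw.2.1 hy.1.1 hy.2.1 ?_,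
    fun v dv hv y hy => F.div3_eq_avg hv hy.1.1 hy.2.1⟩ <;>
    intro i a hfrontier q hq
  · rw [hy.1.2 i a hfrontier q hq, hw.1.2 i a hfrontier q hq]
  · rw [hw.2.2 i a hfrontier q hq, F.faceTanMoment_curl3_IND_eq_zero ((M.el i).face_subset_K a) q
      (hv.memH0Curl isOpen_interior.measurableSet)]
  · rw [hy.2.2 i a hfrontier q hq, hw.2.2 i a hfrontier q hq,
      F.faceTanMoment_IBDM ((M.el i).face_subset_K a) q hu]

/-- Commutativity of the diagrams (2.9) and (2.10): with the
Falk–Winther projections and the derived interpolations (characterized by their DoFs),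
`I_{h0}^{gc}(∇v) = ∇(I_h^g v)`, `I_{h0}^d(curl v) = curl(I_{h0}^{gc} v)`,
`div(I_{h0}^d v) = Q_h(div v)`, and the analogous identities for `I_h^{gc}`, `I_h^d`. -/
theorem statement5 (k : ℕ) (hk : k = 1 ∨ k = 2) (M : Mesh) (Ω : Set Vec)
    (hΩ : M.Covers Ω) (F : FW k M Ω) :
    -- (i)  I_{h0}^{gc}(∇v) = ∇(I_h^g v) for v ∈ H₀¹(Ω)
    (∀ v gv, MemH01S Ω v gv → ∀ w, IsIgc0 k M Ω (F.IND gv) w →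
       ∀ i, ∀ x ∈ (M.el i).K, w i x = grad3 (F.Ig v i) x) ∧
    -- (ii) I_{h0}^d(curl v) = curl (I_{h0}^{gc} v) for v ∈ H₀(grad curl, Ω)
    (∀ u cu J, MemH0GC Ω u cu J → ∀ w, IsIgc0 k M Ω (F.IND u) w →
       ∀ y, IsId0 M Ω (F.IBDM cu) y → ∀ i, ∀ x ∈ (M.el i).K, y i x = curl3 (w i) x) ∧
    -- (iii) div(I_{h0}^d v) = Q_h (div v) for v ∈ H₀¹(Ω;ℝ³)
    (∀ v J, MemH01V Ω v J → ∀ y, IsId0 M Ω (F.IBDM v) y →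
       ∀ i, ∀ x ∈ (M.el i).K, div3 (y i) x = avg M (fun z => ∑ c, J z c c) i) ∧
    -- (i')  for I_h^{gc} on H₀¹(Ω)
    (∀ v gv, MemH01S Ω v gv → ∀ w, IsIgc k M Ω (F.IND gv) w →
       ∀ i, ∀ x ∈ (M.el i).K, w i x = grad3 (F.Ig v i) x) ∧
    -- (ii') for I_h^{gc}, I_h^d on H(grad curl, Ω) ∩ H₀(curl, Ω)
    (∀ u cu J, MemH0Curl Ω u cu → WkJacIn Ω cu J → (∀ a b, MemL2S Ω fun x => J x a b) →
       ∀ w, IsIgc k M Ω (F.IND u) w →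
       ∀ y, IsId M Ω (F.IBDM cu) y → ∀ i, ∀ x ∈ (M.el i).K, y i x = curl3 (w i) x) ∧
    -- (iii') for I_h^d on H¹(Ω;ℝ³) ∩ H₀(div, Ω)
    (∀ v dv J, MemH0Div Ω v dv → WkJacIn Ω v J → (∀ a b, MemL2S Ω fun x => J x a b) →
       ∀ y, IsId M Ω (F.IBDM v) y →
       ∀ i, ∀ x ∈ (M.el i).K, div3 (y i) x = avg M dv i) := by
  obtain rfl := hΩ.1
  obtain ⟨grad0, curl0, div0, grad1, curl1, div1⟩ := statement5_general k hk M F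
  exact ⟨grad0, fun u cu _ hu w hw y hy i x _ => congrFun (curl0 u cu hu.1 w hw y hy i) x,
    fun v _ hv => div0 v _ (hv.memH0Div isOpen_interior.measurableSet), grad1,
    fun u cu _ hu _ _ w hw y hy i x _ => congrFun (curl1 u cu hu w hw y hy i) x,
    fun v dv _ hv _ _ => div1 v dv hv⟩
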